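/- arXiv:2601.20018 — 2 statements merged into one kernel-verified Lean document; each statement's English description precedes it below -/
import Mathlib

section
/- Let N ≥ 20 and let D = [d(i,j,k,ℓ)] ∈ R^{N×N×N×N} be a degenerate tensor. Let N₁ = ⌈N/2⌉, let I and J be independent, each uniformly distributed over the size-N₁ subsets of [N], and given (I,J) let π₁ be uniformly distributed over the bijections I → J and π₂ uniformly distributed over the bijections I^c → J^c, with π₁ and π₂ conditionally independent; let π be uniformly distributed on S_N, independent of (I,J,π₁,π₂). Define Ṽ := (1/N²) Σ_{i,j,k,ℓ∈[N]} d(i,j,k,ℓ)². Then for every λ ≥ 0: E[ exp( λ ( Σ_{i≠j} d(i,j,π(i),π(j)) − E[ Σ_{i≠j} d(i,j,π(i),π(j)) ] ) ) ] ≤ exp(50 Ṽ λ²) · ( E[ exp( 9 λ Σ_{i∈I, j∈I^c} d̃_{I,J}(i,j,π₁(i),π₂(j)) ) ] )^{1/2}. -/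
open scoped BigOperators Classical

/-- Average of `f` over a finite set. -/
noncomputable def avgOn {α : Type*} (s : Finset α) (f : α → ℝ) : ℝ :=
  (∑ x ∈ s, f x) / (s.card : ℝ)

/-- The fully centered restriction `d̃_{I,J}` of a fourth-order tensor `d`,
obtained by inclusion–exclusion of partial averages over
`I` (1st coordinate), `Iᶜ` (2nd), `J` (3rd), `Jᶜ` (4th). -/
noncomputable def tildeD {N : ℕ} (d : Fin N → Fin N → Fin N → Fin N → ℝ)
    (I J : Finset (Fin N)) (i j k l : Fin N) : ℝ :=
  d i j k l
    - avgOn I (fun i' => d i' j k l)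
    - avgOn Iᶜ (fun j' => d i j' k l)
    - avgOn J (fun k' => d i j k' l)
    - avgOn Jᶜ (fun l' => d i j k l')
    + avgOn I (fun i' => avgOn Iᶜ (fun j' => d i' j' k l))
    + avgOn I (fun i' => avgOn J (fun k' => d i' j k' l))
    + avgOn I (fun i' => avgOn Jᶜ (fun l' => d i' j k l'))
    + avgOn Iᶜ (fun j' => avgOn J (fun k' => d i j' k' l))
    + avgOn Iᶜ (fun j' => avgOn Jᶜ (fun l' => d i j' k l'))
    + avgOn J (fun k' => avgOn Jᶜ (fun l' => d i j k' l'))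
    - avgOn I (fun i' => avgOn Iᶜ (fun j' => avgOn J (fun k' => d i' j' k' l)))
    - avgOn I (fun i' => avgOn Iᶜ (fun j' => avgOn Jᶜ (fun l' => d i' j' k l')))
    - avgOn I (fun i' => avgOn J (fun k' => avgOn Jᶜ (fun l' => d i' j k' l')))
    - avgOn Iᶜ (fun j' => avgOn J (fun k' => avgOn Jᶜ (fun l' => d i j' k' l')))
    + avgOn I (fun i' => avgOn Iᶜ (fun j' =>
        avgOn J (fun k' => avgOn Jᶜ (fun l' => d i' j' k' l'))))

/-- Expectation of `f` under the uniform distribution on `S_N`. -/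
noncomputable def permExp (N : ℕ) (f : Equiv.Perm (Fin N) → ℝ) : ℝ :=
  (∑ σ : Equiv.Perm (Fin N), f σ) / (Nat.factorial N : ℝ)

/-- The set of (total-function representatives of) bijections from `I` onto `J`:
functions `Fin N → Fin N` mapping `I` bijectively onto `J`.  Averaging a
quantity that depends only on the restriction to `I` over this set is the same
as averaging over the bijections `I → J`. -/
noncomputable def bijSet {N : ℕ} (I J : Finset (Fin N)) : Finset (Fin N → Fin N) :=
  Finset.univ.filter (fun f : Fin N → Fin N =>
    Set.BijOn f (I : Set (Fin N)) (J : Set (Fin N)))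

/-!
For a permutation `σ`, regard the tensor `H(i, j, k, l) = d(i, j, σ k, σ l)` and write `W`, `D`,
`X`, `Z` for the sums of `H(i, j, i, j)` over `i ≠ j`, of `H(i, i, i, i)`, of `H(i, j, j, i)` and of
`H(i, i, j, j)`. Conjugating by random permutations makes `H` invariant under simultaneous
relabelling, and an invariant degenerate tensor is determined by a few of its entries. This shows
that, up to a factor, the mean over `I` of the centered sums `R_I = ∑_{i ∈ I, j ∉ I} H̃(i, j, i, j)`
is `(N² - 3N + 1) W - (2N - 1) D + X + Z`, where `Z` does not depend on `σ` and `E R_I = 0`.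

Hence `W - E W` is a multiple of the mean of the `R_I` plus small multiples of `D - E D` and
`X - E X`, and the Cauchy–Schwarz inequality separates the two parts. By Jensen's inequality the
first has at most the exponential moment of the decoupled sum, since a uniform `σ` restricted to `I`
and `Iᶜ` is a uniform pair of bijections onto a uniform image `J` and its complement. The sum `D` is
a combinatorial sum `∑ᵢ e(i, σ i)`, whose exponential moments are bounded by induction on `N`,
conditioning on `σ 0` and applying Hoeffding's lemma. The sum `X` satisfies `X² ≤ N² ∑ d²`, and
Hoeffding's lemma suffices.
-/

open Finset Real
open Equiv (Perm swap)

section ExponentialMoments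

variable {Ω : Type*} [Fintype Ω]

theorem exp_expect_le {ι : Type*} {s : Finset ι} (hs : s.Nonempty) (f : ι → ℝ) :
    exp (𝔼 i ∈ s, f i) ≤ 𝔼 i ∈ s, exp (f i) := by
  have hw : ∑ _i ∈ s, (1 / #s : ℝ) = 1 := by
    rw [sum_const, nsmul_eq_mul, mul_one_div_cancel (by exact_mod_cast hs.card_ne_zero)]
  have := convexOn_exp.map_sum_le (p := f) (fun _ _ ↦ by positivity) hw fun _ _ ↦ Set.mem_univ _
  simpa only [expect_eq_sum_div_card, smul_eq_mul, one_div_mul_eq_div, ← sum_div] using this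

theorem expect_exp_add_le (A B : Ω → ℝ) :
    𝔼 ω, exp (A ω + B ω) ≤ √(𝔼 ω, exp (2 * A ω)) * √(𝔼 ω, exp (2 * B ω)) := by
  rw [← sqrt_mul (expect_nonneg fun _ _ ↦ (exp_pos _).le)]
  refine le_sqrt_of_sq_le ?_
  simpa only [exp_add, two_mul, sq] using
    expect_mul_sq_le_sq_mul_sq univ (fun ω ↦ exp (A ω)) (fun ω ↦ exp (B ω))

variable [Nonempty Ω]

theorem expect_exp_mul_le_of_expect_eq_zero {G : Ω → ℝ} (hG : 𝔼 ω, G ω = 0) {r : ℝ}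
    (hr₀ : 0 ≤ r) (hr₁ : r ≤ 1) :
    𝔼 ω, exp (r * G ω) ≤ 𝔼 ω, exp (G ω) := by
  have one_le : 1 ≤ 𝔼 ω, exp (G ω) := by
    simpa [hG] using exp_expect_le univ_nonempty G
  have chord (x : ℝ) : exp (r * x) ≤ (1 - r) + r * exp x := by
    simpa using convexOn_exp.2 (Set.mem_univ 0) (Set.mem_univ x) (sub_nonneg.2 hr₁) hr₀ (by ring)
  calc 𝔼 ω, exp (r * G ω) ≤ 𝔼 ω, ((1 - r) + r * exp (G ω)) := expect_le_expect fun ω _ ↦ chord _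
    _ = (1 - r) + r * 𝔼 ω, exp (G ω) := by
      rw [expect_add_distrib, Fintype.expect_const, mul_expect]
    _ ≤ 𝔼 ω, exp (G ω) := by nlinarith

theorem expect_exp_le_of_mem_Icc {X : Ω → ℝ} {a b : ℝ} (hX : ∀ ω, X ω ∈ Set.Icc a b) :
    𝔼 ω, exp (X ω) ≤ exp (𝔼 ω, X ω + (b - a) ^ 2 / 8) := by
  let _ : MeasurableSpace Ω := ⊤
  have integral_eq (f : Ω → ℝ) : ∫ ω, f ω ∂(PMF.uniformOfFintype Ω).toMeasure = 𝔼 ω, f ω := by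
    simp [PMF.integral_eq_sum, Fintype.expect_eq_sum_div_card, ← mul_sum, div_eq_inv_mul]
  have hoeffding := (ProbabilityTheory.hasSubgaussianMGF_of_mem_Icc
    (μ := (PMF.uniformOfFintype Ω).toMeasure) measurable_from_top.aemeasurable
    (.of_forall hX)).mgf_le 1
  simp only [ProbabilityTheory.mgf, integral_eq, one_mul, NNReal.coe_pow, NNReal.coe_div,
    coe_nnnorm, NNReal.coe_ofNat, div_pow, norm_eq_abs, sq_abs] at hoeffding
  calc 𝔼 ω, exp (X ω) = exp (𝔼 ω, X ω) * 𝔼 ω, exp (X ω - 𝔼 ω', X ω') := by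
        simp only [mul_expect, ← exp_add, add_sub_cancel]
    _ ≤ exp (𝔼 ω, X ω) * exp ((b - a) ^ 2 / 2 ^ 2 * 1 ^ 2 / 2) := by gcongr
    _ = exp (𝔼 ω, X ω + (b - a) ^ 2 / 8) := by rw [← exp_add]; ring_nf

theorem expect_exp_le_sum_sq (X : Ω → ℝ) :
    𝔼 ω, exp (X ω) ≤ exp (𝔼 ω, X ω + (∑ ω, X ω ^ 2) / 4) := by
  obtain ⟨x, hx⟩ := Finite.exists_min X
  obtain ⟨y, hy⟩ := Finite.exists_max X
  refine (expect_exp_le_of_mem_Icc fun ω ↦ ⟨hx ω, hy ω⟩).trans ?_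
  have range_sq_le : (X y - X x) ^ 2 ≤ 2 * ∑ ω, X ω ^ 2 := by
    obtain rfl | hxy := eq_or_ne x y
    · simp [sum_nonneg, sq_nonneg]
    have := sum_le_univ_sum_of_nonneg (s := {x, y}) fun ω ↦ sq_nonneg (X ω)
    rw [sum_pair hxy] at this
    nlinarith [sq_nonneg (X y + X x)]
  rw [exp_le_exp]
  linarith

end ExponentialMoments

section CombinatorialSums

variable {n : ℕ}

theorem expect_perm_fin_succ (f : Perm (Fin (n + 1)) → ℝ) :
    𝔼 σ, f σ = 𝔼 p, 𝔼 τ, f (Perm.decomposeFin.symm (p, τ)) := by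
  rw [← expect_product', univ_product_univ]
  exact Fintype.expect_equiv Perm.decomposeFin _ _ fun σ ↦ by simp

theorem sum_swap_zero_succ (p : Fin (n + 1)) (f : Fin (n + 1) → ℝ) :
    ∑ k : Fin n, f (swap 0 p k.succ) = ∑ k, f k - f p := by
  rw [← Equiv.sum_comp (swap 0 p) f, Fin.sum_univ_succ, Equiv.swap_apply_left, add_sub_cancel_left]

/-- The bound on the exponential moments of all combinatorial sums over `Fin n`, in the form
that the induction on `n` needs. -/
def CombinatorialMGFBound (n : ℕ) : Prop :=
  ∀ e : Fin n → Fin n → ℝ, 𝔼 σ : Perm (Fin n), exp (∑ i, e i (σ i)) ≤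
    exp ((∑ i, ∑ k, e i k) / n + ∑ i, ∑ k, e i k ^ 2)

-- Given `σ 0 = p`, the remaining values form a uniform bijection onto `{p}ᶜ`, whose entries have
-- total `e 0 p - ∑ k, e 0 k` because the columns are centered.
theorem expect_exp_decomposeFin_le (ih : CombinatorialMGFBound n)
    {e : Fin (n + 1) → Fin (n + 1) → ℝ} (hcol : ∀ k, ∑ i, e i k = 0) (p : Fin (n + 1)) :
    𝔼 τ : Perm (Fin n), exp (∑ i, e i (Perm.decomposeFin.symm (p, τ) i)) ≤
      exp (e 0 p + (e 0 p - ∑ k, e 0 k) / n + ∑ i : Fin n, ∑ k, e i.succ k ^ 2) := by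
  have succ_col (k) : ∑ i : Fin n, e i.succ k = -e 0 k := by
    linarith [hcol k, Fin.sum_univ_succ fun i ↦ e i k]
  have total : ∑ i : Fin n, ∑ k : Fin n, e i.succ (swap 0 p k.succ) = e 0 p - ∑ k, e 0 k := by
    simp only [sum_swap_zero_succ, sum_sub_distrib, succ_col]
    rw [sum_comm]
    simp only [succ_col, sum_neg_distrib]
    ring
  have squares : ∑ i : Fin n, ∑ k : Fin n, e i.succ (swap 0 p k.succ) ^ 2 ≤
      ∑ i : Fin n, ∑ k, e i.succ k ^ 2 := by
    gcongr with i
    rw [sum_swap_zero_succ p fun k ↦ e i.succ k ^ 2]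
    linarith [sq_nonneg (e i.succ p)]
  have split (τ : Perm (Fin n)) : exp (∑ i, e i (Perm.decomposeFin.symm (p, τ) i)) =
      exp (e 0 p) * exp (∑ i : Fin n, e i.succ (swap 0 p (τ i).succ)) := by
    simp only [Fin.sum_univ_succ, Perm.decomposeFin_symm_apply_zero,
      Perm.decomposeFin_symm_apply_succ, exp_add]
  simp only [split, ← mul_expect, add_assoc]
  rw [exp_add (e 0 p)]
  gcongr
  refine (ih fun i k ↦ e i.succ (swap 0 p k.succ)).trans ?_
  rw [total]
  gcongr

theorem expect_exp_le_of_centered (ih : CombinatorialMGFBound (n + 1))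
    {e : Fin (n + 2) → Fin (n + 2) → ℝ} (hcol : ∀ k, ∑ i, e i k = 0) :
    𝔼 σ : Perm (Fin (n + 2)), exp (∑ i, e i (σ i)) ≤ exp (∑ i, ∑ k, e i k ^ 2) := by
  set r := ∑ k, e 0 k with hr
  set Q := ∑ i : Fin (n + 1), ∑ k, e i.succ k ^ 2 with hQ
  set c : ℝ := (n + 2) / (n + 1) with hc
  have c_sq_le : c ^ 2 ≤ 4 := by
    rw [hc, div_pow, div_le_iff₀ (by positivity)]
    nlinarith [Nat.cast_nonneg (α := ℝ) n]
  have hoeffding : 𝔼 p, exp (c * e 0 p) ≤ exp (r / (n + 1) + ∑ k, e 0 k ^ 2) := by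
    refine (expect_exp_le_sum_sq _).trans (exp_le_exp.2 (add_le_add (le_of_eq ?_) ?_))
    · rw [← mul_expect, Fintype.expect_eq_sum_div_card, Fintype.card_fin, ← hr, hc]
      push_cast
      field_simp
    · simp only [mul_pow, ← mul_sum]
      nlinarith [sum_nonneg fun k (_ : k ∈ univ) ↦ sq_nonneg (e 0 k)]
  calc 𝔼 σ : Perm (Fin (n + 2)), exp (∑ i, e i (σ i))
      ≤ 𝔼 p, exp (e 0 p + (e 0 p - r) / (n + 1 : ℕ) + Q) := by
        rw [expect_perm_fin_succ]
        exact expect_le_expect fun p _ ↦ expect_exp_decomposeFin_le ih hcol p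
    _ = exp (Q - r / (n + 1)) * 𝔼 p, exp (c * e 0 p) := by
        rw [mul_expect]
        refine expect_congr rfl fun p _ ↦ ?_
        rw [← exp_add, hc]
        push_cast
        congr 1
        field_simp
        ring
    _ ≤ exp (Q - r / (n + 1)) * exp (r / (n + 1) + ∑ k, e 0 k ^ 2) := by gcongr
    _ = exp (∑ i, ∑ k, e i k ^ 2) := by
        rw [← exp_add, Fin.sum_univ_succ fun i ↦ ∑ k, e i k ^ 2, ← hQ]
        ring_nf

theorem sum_sub_expect_sq_le {ι : Type*} [Fintype ι] [Nonempty ι] (f : ι → ℝ) :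
    ∑ i, (f i - 𝔼 j, f j) ^ 2 ≤ ∑ i, f i ^ 2 := by
  have cross : ∑ i, f i = Fintype.card ι * 𝔼 j, f j := (Fintype.card_mul_expect f).symm
  simp only [sub_sq, sum_add_distrib, sum_sub_distrib, ← sum_mul, ← mul_sum, cross, sum_const,
    card_univ, nsmul_eq_mul]
  nlinarith [mul_nonneg (Nat.cast_nonneg (α := ℝ) (Fintype.card ι)) (sq_nonneg (𝔼 j, f j))]

theorem CombinatorialMGFBound.succ_succ (ih : CombinatorialMGFBound (n + 1)) :
    CombinatorialMGFBound (n + 2) := by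
  intro e
  set m : Fin (n + 2) → ℝ := fun k ↦ 𝔼 i, e i k with hm
  have mean_total : (∑ i, ∑ k, e i k) / (n + 2 : ℕ) = ∑ k, m k := by
    rw [sum_comm, sum_div]
    simp only [hm, Fintype.expect_eq_sum_div_card, Fintype.card_fin]
  have centered_col (k) : ∑ i, (e i k - m k) = 0 := by
    rw [sum_sub_distrib, sum_const, card_univ, nsmul_eq_mul, hm, Fintype.card_mul_expect, sub_self]
  have centered_sq : ∑ i, ∑ k, (e i k - m k) ^ 2 ≤ ∑ i, ∑ k, e i k ^ 2 := by
    rw [sum_comm, sum_comm (f := fun i k ↦ e i k ^ 2)]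
    exact sum_le_sum fun k _ ↦ sum_sub_expect_sq_le fun i ↦ e i k
  have shift (σ : Perm (Fin (n + 2))) :
      ∑ i, e i (σ i) = ∑ k, m k + ∑ i, (e i (σ i) - m (σ i)) := by
    rw [sum_sub_distrib, Equiv.sum_comp σ m, add_sub_cancel]
  simp only [shift, exp_add _ (∑ _, (_ - _)), ← mul_expect]
  rw [mean_total, exp_add]
  gcongr
  exact (expect_exp_le_of_centered ih centered_col).trans (exp_le_exp.2 centered_sq)

theorem combinatorialMGFBound : ∀ n, CombinatorialMGFBound n
  | 0 => fun e ↦ by simp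
  | 1 => fun e ↦ by simp [sq_nonneg]
  | n + 2 => (combinatorialMGFBound (n + 1)).succ_succ

end CombinatorialSums

section UniformPermutations

open scoped Pointwise

theorem expect_smul_eq_expect {G X : Type*} [Group G] [Fintype G] [Fintype X] [MulAction G X]
    [MulAction.IsPretransitive G X] (Φ : X → ℝ) (x : X) : 𝔼 g : G, Φ (g • x) = 𝔼 y, Φ y := by
  have eq_orbit (y : X) : 𝔼 g : G, Φ (g • y) = 𝔼 g : G, Φ (g • x) := by
    obtain ⟨h, rfl⟩ := MulAction.exists_smul_eq G x y
    exact Fintype.expect_equiv (Equiv.mulRight h) _ _ fun g ↦ by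
      rw [Equiv.coe_mulRight, mul_smul]
  have : Nonempty X := ⟨x⟩
  calc 𝔼 g : G, Φ (g • x) = 𝔼 y : X, 𝔼 g : G, Φ (g • y) := by
        simp only [eq_orbit, Fintype.expect_const]
    _ = 𝔼 g : G, 𝔼 y : X, Φ (g • y) := expect_comm _ _ _
    _ = 𝔼 _g : G, 𝔼 y, Φ y := expect_congr rfl fun g _ ↦
        Fintype.expect_equiv (MulAction.toPerm g) _ _ fun _ ↦ rfl
    _ = 𝔼 y, Φ y := Fintype.expect_const _

theorem expect_map_perm {α : Type*} (s : Finset α) (σ : Perm α) (f : α → ℝ) :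
    𝔼 x ∈ s.map σ.toEmbedding, f x = 𝔼 x ∈ s, f (σ x) := by
  simp [expect]

variable {α : Type*} [Fintype α] [DecidableEq α]

theorem expect_perm_apply (Φ : α → ℝ) (a : α) : 𝔼 σ : Perm α, Φ (σ a) = 𝔼 b, Φ b :=
  expect_smul_eq_expect Φ a

theorem expect_perm_map (Φ : Finset α → ℝ) (I : Finset α) :
    𝔼 σ : Perm α, Φ (I.map σ.toEmbedding) = 𝔼 J ∈ powersetCard #I univ, Φ J := by
  let _ : Fintype (Set.powersetCard α #I) := Fintype.ofFinite _
  have := Set.powersetCard.isPretransitive (α := α) (n := #I)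
  calc 𝔼 σ : Perm α, Φ (I.map σ.toEmbedding)
      = 𝔼 σ : Perm α, Φ (σ • (⟨I, rfl⟩ : Set.powersetCard α #I)) := by
        simp only [map_eq_image]; rfl
    _ = 𝔼 J : Set.powersetCard α #I, Φ J :=
        expect_smul_eq_expect (fun J : Set.powersetCard α #I ↦ Φ J) _
    _ = 𝔼 J ∈ powersetCard #I univ, Φ J :=
        expect_bij (fun J _ ↦ J) (fun J _ ↦ mem_powersetCard_univ.2 J.2) (fun _ _ ↦ rfl)
          (fun _ _ _ _ ↦ Subtype.ext)
          fun J hJ ↦ ⟨⟨J, mem_powersetCard_univ.1 hJ⟩, mem_univ _, rfl⟩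

theorem compl_map_perm (s : Finset α) (σ : Perm α) :
    (s.map σ.toEmbedding)ᶜ = sᶜ.map σ.toEmbedding := by
  ext x
  simp [mem_map_equiv]

end UniformPermutations

section RandomBijections

variable {N : ℕ} {I J : Finset (Fin N)}

theorem mem_bijSet {f : Fin N → Fin N} : f ∈ bijSet I J ↔ Set.BijOn f I J := by
  simp [bijSet]

theorem id_mem_bijSet (I : Finset (Fin N)) : id ∈ bijSet I I := mem_bijSet.2 (Set.bijOn_id _)

theorem expect_bijSet_map (σ : Perm (Fin N)) (F : (Fin N → Fin N) → ℝ) :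
    𝔼 f ∈ bijSet I (J.map σ.toEmbedding), F f = 𝔼 f ∈ bijSet I J, F (σ ∘ f) := by
  have bijOn_map : Set.BijOn σ J (J.map σ.toEmbedding) := by
    rw [coe_map]
    exact σ.injective.injOn.bijOn_image
  have bijOn_symm : Set.BijOn σ.symm (J.map σ.toEmbedding) J := bijOn_map.symm σ.invOn
  exact expect_nbij' (σ.symm ∘ ·) (σ ∘ ·)
    (fun f hf ↦ mem_bijSet.2 (bijOn_symm.comp (mem_bijSet.1 hf)))
    (fun f hf ↦ mem_bijSet.2 (bijOn_map.comp (mem_bijSet.1 hf)))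
    (fun f _ ↦ by simp [← Function.comp_assoc]) (fun f _ ↦ by simp [← Function.comp_assoc])
    (fun f _ ↦ by simp [← Function.comp_assoc])

theorem exists_perm_eqOn_of_mem_bijSet {f g : Fin N → Fin N} (hf : f ∈ bijSet I I)
    (hg : g ∈ bijSet Iᶜ Iᶜ) :
    ∃ τ : Perm (Fin N), I.map τ.toEmbedding = I ∧ Set.EqOn f τ I ∧ Set.EqOn g τ ↑Iᶜ := by
  rw [mem_bijSet] at hf hg
  have glue_left : Set.EqOn f (I.piecewise f g) I := fun i hi ↦ by simp_all
  have glue_right : Set.EqOn g (I.piecewise f g) ↑Iᶜ := fun i hi ↦ by simp_all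
  have surj : Function.Surjective (I.piecewise f g) := by
    rw [← Set.surjOn_univ, ← Set.union_compl_self (I : Set (Fin N)), ← coe_compl]
    exact (hf.congr glue_left).surjOn.union_union (hg.congr glue_right).surjOn
  refine ⟨.ofBijective _ (Finite.surjective_iff_bijective.1 surj), ?_, glue_left, glue_right⟩
  have := (hf.congr glue_left).image_eq
  rw [← coe_inj, coe_map]
  exact this

theorem expect_expect_bijSet (I : Finset (Fin N))
    {Ψ : Finset (Fin N) → (Fin N → Fin N) → (Fin N → Fin N) → ℝ}
    (hΨ : ∀ J f f' g g', Set.EqOn f f' I → Set.EqOn g g' ↑Iᶜ → Ψ J f g = Ψ J f' g') :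
    𝔼 J ∈ powersetCard #I univ, 𝔼 f ∈ bijSet I J, 𝔼 g ∈ bijSet Iᶜ Jᶜ, Ψ J f g =
      𝔼 σ : Perm (Fin N), Ψ (I.map σ.toEmbedding) σ σ := by
  have inner {f g} (hf : f ∈ bijSet I I) (hg : g ∈ bijSet Iᶜ Iᶜ) :
      𝔼 σ : Perm (Fin N), Ψ (I.map σ.toEmbedding) (σ ∘ f) (σ ∘ g) =
        𝔼 σ : Perm (Fin N), Ψ (I.map σ.toEmbedding) σ σ := by
    obtain ⟨τ, hτ, hfτ, hgτ⟩ := exists_perm_eqOn_of_mem_bijSet hf hg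
    refine Fintype.expect_equiv (Equiv.mulRight τ) _ _ fun σ ↦ ?_
    have map_mul : I.map (σ * τ).toEmbedding = I.map σ.toEmbedding := by
      conv_rhs => rw [← hτ, map_map]
      rfl
    rw [Equiv.coe_mulRight, map_mul]
    exact hΨ _ _ _ _ _ (hfτ.comp_left) (hgτ.comp_left)
  calc 𝔼 J ∈ powersetCard #I univ, 𝔼 f ∈ bijSet I J, 𝔼 g ∈ bijSet Iᶜ Jᶜ, Ψ J f g
      = 𝔼 σ : Perm (Fin N), 𝔼 f ∈ bijSet I I, 𝔼 g ∈ bijSet Iᶜ Iᶜ,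
          Ψ (I.map σ.toEmbedding) (σ ∘ f) (σ ∘ g) := by
        simp only [← expect_perm_map, compl_map_perm, expect_bijSet_map]
    _ = 𝔼 f ∈ bijSet I I, 𝔼 g ∈ bijSet Iᶜ Iᶜ, 𝔼 σ : Perm (Fin N),
          Ψ (I.map σ.toEmbedding) (σ ∘ f) (σ ∘ g) := by
        rw [expect_comm]
        exact expect_congr rfl fun f _ ↦ expect_comm _ _ _
    _ = 𝔼 _f ∈ bijSet I I, 𝔼 _g ∈ bijSet Iᶜ Iᶜ,
          𝔼 σ : Perm (Fin N), Ψ (I.map σ.toEmbedding) σ σ :=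
        expect_congr rfl fun f hf ↦ expect_congr rfl fun g hg ↦ inner hf hg
    _ = 𝔼 σ : Perm (Fin N), Ψ (I.map σ.toEmbedding) σ σ := by
        rw [expect_const ⟨_, id_mem_bijSet _⟩, expect_const ⟨_, id_mem_bijSet _⟩]

end RandomBijections

section Tensors

variable {α : Type*}

/-- A fourth-order tensor is degenerate if its sum over each single index vanishes. -/
structure IsDegenerate [Fintype α] (h : α → α → α → α → ℝ) : Prop where
  sum_fst : ∀ j k l, ∑ i, h i j k l = 0
  sum_snd : ∀ i k l, ∑ j, h i j k l = 0
  sum_thd : ∀ i j l, ∑ k, h i j k l = 0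
  sum_fth : ∀ i j k, ∑ l, h i j k l = 0

/-- The tensor `h` with its row indices (the first two) relabelled by `τ` and its column indices
(the last two) by `σ`. -/
def relabel (τ σ : Perm α) (h : α → α → α → α → ℝ) (i j k l : α) : ℝ :=
  h (τ i) (τ j) (σ k) (σ l)

/-- A tensor is invariant if it is unchanged by relabelling rows and columns simultaneously, so that
an entry depends only on which of its indices coincide. -/
def IsRelabelInvariant (h : α → α → α → α → ℝ) : Prop :=
  ∀ (τ : Perm α) (i j k l : α), h (τ i) (τ j) (τ k) (τ l) = h i j k l

/-- The average of `h` over all simultaneous relabellings of its rows and columns. -/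
noncomputable def symmetrize [Fintype α] [DecidableEq α] (h : α → α → α → α → ℝ)
    (i j k l : α) : ℝ :=
  𝔼 τ : Perm α, relabel τ τ h i j k l

/-- The double sum `∑_{i ≠ j} h(i, j, i, j)`, which is the quantity being decoupled: for the
tensor `relabel 1 σ h` it is `∑_{i ≠ j} h(i, j, σ i, σ j)`. -/
def offDiagSum [Fintype α] [DecidableEq α] (h : α → α → α → α → ℝ) : ℝ :=
  ∑ p ∈ (univ : Finset α).offDiag, h p.1 p.2 p.1 p.2

/-- The diagonal sum `∑ᵢ h(i, i, i, i)`, a correction term in `decouplingCombination`. -/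
def diagSum [Fintype α] (h : α → α → α → α → ℝ) : ℝ := ∑ i, h i i i i

/-- The sum `∑_{i, j} h(i, j, j, i)`, a correction term in `decouplingCombination`. -/
def crossSum [Fintype α] (h : α → α → α → α → ℝ) : ℝ := ∑ i, ∑ j, h i j j i

/-- The sum `∑_{i, j} h(i, i, j, j)`, a correction term in `decouplingCombination` that is constant
for the tensors `relabel 1 σ h`. -/
def pairSum [Fintype α] (h : α → α → α → α → ℝ) : ℝ := ∑ i, ∑ j, h i i j j

/-- The combination of the four sums to which the second differences of a degenerate tensor
average under relabelling, up to the factor `N (N - 1) (N - 2) (N - 3)`. -/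
noncomputable def decouplingCombination [Fintype α] [DecidableEq α] (h : α → α → α → α → ℝ) : ℝ :=
  ((Fintype.card α : ℝ) ^ 2 - 3 * Fintype.card α + 1) * offDiagSum h
    - (2 * Fintype.card α - 1) * diagSum h + crossSum h + pairSum h

/-- The difference of `h(a, c, a, c)` in its third argument from `a` to `b` and in its fourth
argument from `c` to `e`. -/
def secondDiff (h : α → α → α → α → ℝ) (a b c e : α) : ℝ :=
  h a c a c - h a c b c - h a c a e + h a c b e

variable [Fintype α] {h : α → α → α → α → ℝ}

theorem IsDegenerate.relabel (hh : IsDegenerate h) (τ σ : Perm α) :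
    IsDegenerate (relabel τ σ h) where
  sum_fst j k l := (Equiv.sum_comp τ fun i ↦ h i (τ j) (σ k) (σ l)).trans (hh.sum_fst _ _ _)
  sum_snd i k l := (Equiv.sum_comp τ fun j ↦ h (τ i) j (σ k) (σ l)).trans (hh.sum_snd _ _ _)
  sum_thd i j l := (Equiv.sum_comp σ fun k ↦ h (τ i) (τ j) k (σ l)).trans (hh.sum_thd _ _ _)
  sum_fth i j k := (Equiv.sum_comp σ fun l ↦ h (τ i) (τ j) (σ k) l).trans (hh.sum_fth _ _ _)

theorem sum_eq_of_fixed {s : Finset α} {b : α} (hb : b ∉ s) (f : α → ℝ)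
    (hf : ∀ τ : Perm α, (∀ x ∈ s, τ x = x) → f (τ b) = f b) :
    ∑ x, f x = ∑ x ∈ s, f x + (Fintype.card α - #s) * f b := by
  have off (x : α) (hx : x ∈ sᶜ) : f x = f b := by
    have fixes (y : α) (hy : y ∈ s) : swap b x y = y :=
      Equiv.swap_apply_of_ne_of_ne (ne_of_mem_of_not_mem hy hb)
        (ne_of_mem_of_not_mem hy (mem_compl.1 hx))
    simpa using hf (swap b x) fixes
  rw [← sum_add_sum_compl s f, sum_congr rfl off, sum_const, card_compl, nsmul_eq_mul,
    Nat.cast_sub (card_le_univ s)]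

theorem sum_sum_of_invariant {φ : α → α → ℝ} (hφ : ∀ (τ : Perm α) i j, φ (τ i) (τ j) = φ i j)
    {a c : α} (hac : a ≠ c) :
    ∑ i, ∑ j, φ i j = Fintype.card α * (φ a a + (Fintype.card α - 1) * φ a c) := by
  have row (i : α) : ∑ j, φ i j = ∑ j, φ a j := by
    rw [← Equiv.sum_comp (swap a i) (φ i)]
    refine sum_congr rfl fun j _ ↦ ?_
    rw [← hφ (swap a i) a j, Equiv.swap_apply_left]
  have entries : ∑ j, φ a j = φ a a + (Fintype.card α - 1) * φ a c := by
    simpa using sum_eq_of_fixed (s := {a}) (b := c) (by simpa using hac.symm) (φ a)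
      fun τ hτ ↦ by simpa [hτ] using hφ τ a c
  simp only [row, entries, sum_const, card_univ, nsmul_eq_mul]

theorem IsDegenerate.sum_fst_of_invariant (hdeg : IsDegenerate h) (hinv : IsRelabelInvariant h)
    {a b c : α} (hab : a ≠ b) (hac : a ≠ c) (hbc : b ≠ c) :
    0 = h a c a a + h a a c c + (Fintype.card α - 2) * h a c b b := by
  have bcbb : h b c b b = h a c a a := by
    simpa [Equiv.swap_apply_of_ne_of_ne hac.symm hbc.symm] using hinv (swap a b) a c a a
  have ccbb : h c c b b = h a a c c := by
    calc h c c b b = h a a b b := by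
          simpa [Equiv.swap_apply_of_ne_of_ne hab.symm hbc] using hinv (swap a c) a a b b
      _ = h a a c c := by
          simpa [Equiv.swap_apply_of_ne_of_ne hac hab] using hinv (swap c b) a a c c
  simpa [hdeg.sum_fst, hbc, bcbb, ccbb] using sum_eq_of_fixed (s := {b, c}) (b := a)
    (by simp [hab, hac]) (fun i ↦ h i c b b) fun τ hτ ↦ by simpa [hτ] using hinv τ a c b b

variable [DecidableEq α]

theorem IsDegenerate.symmetrize (hh : IsDegenerate h) : IsDegenerate (symmetrize h) where
  sum_fst _ _ _ := by
    simp only [_root_.symmetrize, ← expect_sum_comm, (hh.relabel _ _).sum_fst, expect_const_zero]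
  sum_snd _ _ _ := by
    simp only [_root_.symmetrize, ← expect_sum_comm, (hh.relabel _ _).sum_snd, expect_const_zero]
  sum_thd _ _ _ := by
    simp only [_root_.symmetrize, ← expect_sum_comm, (hh.relabel _ _).sum_thd, expect_const_zero]
  sum_fth _ _ _ := by
    simp only [_root_.symmetrize, ← expect_sum_comm, (hh.relabel _ _).sum_fth, expect_const_zero]

theorem isRelabelInvariant_symmetrize (h : α → α → α → α → ℝ) : IsRelabelInvariant (symmetrize h) :=
  fun ρ _ _ _ _ ↦ Fintype.expect_equiv (Equiv.mulRight ρ) _ _ fun _ ↦ rfl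

theorem sum_sum_expect_perm (φ : α → α → ℝ) :
    ∑ i, ∑ j, 𝔼 τ : Perm α, φ (τ i) (τ j) = ∑ i, ∑ j, φ i j := by
  have reindex (τ : Perm α) : ∑ i, ∑ j, φ (τ i) (τ j) = ∑ i, ∑ j, φ i j := by
    rw [← Equiv.sum_comp τ fun i ↦ ∑ j, φ i j]
    exact sum_congr rfl fun i _ ↦ Equiv.sum_comp τ fun j ↦ φ (τ i) j
  simp only [← expect_sum_comm, reindex, Fintype.expect_const]

theorem offDiagSum_eq_sub (h : α → α → α → α → ℝ) :
    offDiagSum h = ∑ i, ∑ j, h i j i j - diagSum h := by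
  rw [eq_sub_iff_add_eq', offDiagSum, diagSum, ← sum_product',
    ← sum_diag univ fun p : α × α ↦ h p.1 p.2 p.1 p.2, ← diag_union_offDiag,
    sum_union (disjoint_diag_offDiag univ)]

theorem diagSum_symmetrize (h : α → α → α → α → ℝ) : diagSum (symmetrize h) = diagSum h := by
  simp only [diagSum, symmetrize, relabel, ← expect_sum_comm,
    Equiv.sum_comp _ fun i ↦ h i i i i, Fintype.expect_const]

theorem decouplingCombination_symmetrize (h : α → α → α → α → ℝ) :
    decouplingCombination (symmetrize h) = decouplingCombination h := by
  have offDiag : offDiagSum (symmetrize h) = offDiagSum h := by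
    rw [offDiagSum_eq_sub, offDiagSum_eq_sub, diagSum_symmetrize]
    exact congrArg (· - _) (sum_sum_expect_perm fun i j ↦ h i j i j)
  have cross : crossSum (symmetrize h) = crossSum h := sum_sum_expect_perm fun i j ↦ h i j j i
  have pair : pairSum (symmetrize h) = pairSum h := sum_sum_expect_perm fun i j ↦ h i i j j
  rw [decouplingCombination, offDiag, diagSum_symmetrize, cross, pair, decouplingCombination]

theorem decouplingCombination_of_invariant (hinv : IsRelabelInvariant h) {a c : α} (hac : a ≠ c) :
    decouplingCombination h = Fintype.card α *
      (((Fintype.card α : ℝ) ^ 2 - 3 * Fintype.card α + 1) * ((Fintype.card α - 1) * h a c a c)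
        - (2 * Fintype.card α - 3) * h a a a a
        + (Fintype.card α - 1) * (h a c c a + h a a c c)) := by
  have diag : diagSum h = Fintype.card α * h a a a a := by
    have entry (i : α) : h i i i i = h a a a a := by
      simpa using (hinv (swap i a) i i i i).symm
    simp [diagSum, entry]
  rw [decouplingCombination, offDiagSum_eq_sub, diag, crossSum, pairSum,
    sum_sum_of_invariant (fun τ i j ↦ hinv τ i j i j) hac,
    sum_sum_of_invariant (fun τ i j ↦ hinv τ i j j i) hac,
    sum_sum_of_invariant (fun τ i j ↦ hinv τ i i j j) hac]
  ring

-- Summing a degenerate tensor over one index, the remaining indices ranging over a few distinct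
-- points, gives a linear relation between its values at those points; the relations below express
-- each term of the second difference through `h a c a c`, `h a a a a`, `h a c c a`, `h a a c c`.
theorem secondDiff_of_invariant (hdeg : IsDegenerate h) (hinv : IsRelabelInvariant h)
    {a b c e : α} (hab : a ≠ b) (hce : c ≠ e) (hac : a ≠ c) (hae : a ≠ e) (hbc : b ≠ c)
    (hbe : b ≠ e) :
    (Fintype.card α : ℝ) * (Fintype.card α - 1) * (Fintype.card α - 2) * (Fintype.card α - 3) *
      secondDiff h a b c e = decouplingCombination h := by
  set N : ℝ := (Fintype.card α : ℝ) with hN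
  have accc : 0 = h a a a a + (N - 1) * h a c c c := by
    have hcccc : h c c c c = h a a a a := by simpa using hinv (swap a c) a a a a
    simpa [hdeg.sum_fst, hcccc] using sum_eq_of_fixed (s := {c}) (b := a) (by simp [hac])
      (fun i ↦ h i c c c) fun τ hτ ↦ by simpa [hτ] using hinv τ a c c c
  have acaa : 0 = h a a a a + (N - 1) * h a c a a := by
    simpa [hdeg.sum_snd] using sum_eq_of_fixed (s := {a}) (b := c) (by simp [hac.symm])
      (fun j ↦ h a j a a) fun τ hτ ↦ by simpa [hτ] using hinv τ a c a a
  have acbc : 0 = h a c a c + h a c c c + (N - 2) * h a c b c := by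
    simpa [hdeg.sum_thd, hac] using sum_eq_of_fixed (s := {a, c}) (b := b) (by simp [*, hab.symm])
      (fun k ↦ h a c k c) fun τ hτ ↦ by simpa [hτ] using hinv τ a c b c
  have acba : 0 = h a c a a + h a c c a + (N - 2) * h a c b a := by
    simpa [hdeg.sum_thd, hac] using sum_eq_of_fixed (s := {a, c}) (b := b) (by simp [*, hab.symm])
      (fun k ↦ h a c k a) fun τ hτ ↦ by simpa [hτ] using hinv τ a c b a
  have acae : 0 = h a c a a + h a c a c + (N - 2) * h a c a e := by
    simpa [hdeg.sum_fth, hac] using sum_eq_of_fixed (s := {a, c}) (b := e)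
      (by simp [hae.symm, hce.symm])
      (fun l ↦ h a c a l) fun τ hτ ↦ by simpa [hτ] using hinv τ a c a e
  have acbb := hdeg.sum_fst_of_invariant hinv hab hac hbc
  have acbe : 0 = h a c b a + h a c b b + h a c b c + (N - 3) * h a c b e := by
    simpa [hdeg.sum_fth, hab, hac, hbc, add_assoc] using sum_eq_of_fixed (s := {a, b, c}) (b := e)
      (by simp [hae.symm, hbe.symm, hce.symm])
      (fun l ↦ h a c b l) fun τ hτ ↦ by simpa [hτ] using hinv τ a c b e
  rw [decouplingCombination_of_invariant hinv hac, ← hN, secondDiff]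
  linear_combination N * (N - 1) * ((N - 2) * (acbc - acbe) + (N - 3) * acae + acba + acbb - acaa)
    - N * (N - 2) * accc

theorem secondDiff_symmetrize (hdeg : IsDegenerate h) {a b c e : α} (hac : a ≠ c) (hae : a ≠ e)
    (hbc : b ≠ c) (hbe : b ≠ e) :
    (Fintype.card α : ℝ) * (Fintype.card α - 1) * (Fintype.card α - 2) * (Fintype.card α - 3) *
      secondDiff (symmetrize h) a b c e =
        if a = b then 0 else if c = e then 0 else decouplingCombination h := by
  split_ifs with hab hce
  · simp [secondDiff, hab]
  · simp [secondDiff, hce]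
  · rw [← decouplingCombination_symmetrize h, secondDiff_of_invariant hdeg.symmetrize
      (isRelabelInvariant_symmetrize h) hab hce hac hae hbc hbe]

end Tensors

section CenteredRestriction

theorem avgOn_eq_expect {ι : Type*} (s : Finset ι) (f : ι → ℝ) : avgOn s f = 𝔼 x ∈ s, f x :=
  (expect_eq_sum_div_card s f).symm

/-- The matrix `ψ` with its row and column averages over `s` removed. -/
noncomputable def doubleCenter {α : Type*} (s : Finset α) (ψ : α → α → ℝ) (i k : α) : ℝ :=
  ψ i k - 𝔼 i' ∈ s, ψ i' k - 𝔼 k' ∈ s, ψ i k' + 𝔼 i' ∈ s, 𝔼 k' ∈ s, ψ i' k'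

theorem expect_doubleCenter_diag {α : Type*} {s : Finset α} (hs : s.Nonempty) (ψ : α → α → ℝ) :
    𝔼 i ∈ s, doubleCenter s ψ i i = 𝔼 a ∈ s, 𝔼 b ∈ s, (ψ a a - ψ a b) := by
  simp only [doubleCenter, expect_add_distrib, expect_sub_distrib, expect_const hs]
  rw [expect_comm s s fun i i' ↦ ψ i' i]
  ring

variable {N : ℕ}

theorem tildeD_self (d : Fin N → Fin N → Fin N → Fin N → ℝ) (I : Finset (Fin N))
    (i j k l : Fin N) :
    tildeD d I I i j k l =
      doubleCenter Iᶜ (fun j l ↦ doubleCenter I (fun i k ↦ d i j k l) i k) j l := by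
  simp only [tildeD, avgOn_eq_expect, doubleCenter, expect_add_distrib, expect_sub_distrib,
    expect_comm Iᶜ I]
  ring

theorem tildeD_map (d : Fin N → Fin N → Fin N → Fin N → ℝ) (I J : Finset (Fin N))
    (ρ σ : Perm (Fin N)) (i j k l : Fin N) :
    tildeD d (I.map ρ.toEmbedding) (J.map σ.toEmbedding) (ρ i) (ρ j) (σ k) (σ l) =
      tildeD (relabel ρ σ d) I J i j k l := by
  simp only [tildeD, avgOn_eq_expect, compl_map_perm, expect_map_perm, relabel]

/-- The sum `∑_{i ∈ I, j ∉ I} h̃(i, j, i, j)` for the fully centered restriction `h̃` of `h` to `I`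
and its complement, in rows as in columns. -/
noncomputable def restrictedSum (h : Fin N → Fin N → Fin N → Fin N → ℝ) (I : Finset (Fin N)) : ℝ :=
  ∑ i ∈ I, ∑ j ∈ Iᶜ, tildeD h I I i j i j

theorem restrictedSum_eq {I : Finset (Fin N)} (hI : I.Nonempty) (hIc : Iᶜ.Nonempty)
    (h : Fin N → Fin N → Fin N → Fin N → ℝ) :
    restrictedSum h I =
      #I * #Iᶜ * 𝔼 a ∈ I, 𝔼 b ∈ I, 𝔼 c ∈ Iᶜ, 𝔼 e ∈ Iᶜ, secondDiff h a b c e := by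
  have centered : 𝔼 i ∈ I, 𝔼 j ∈ Iᶜ, tildeD h I I i j i j =
      𝔼 a ∈ I, 𝔼 b ∈ I, 𝔼 c ∈ Iᶜ, 𝔼 e ∈ Iᶜ, secondDiff h a b c e := by
    simp only [tildeD_self]
    simp only [expect_doubleCenter_diag hIc]
    simp only [expect_sub_distrib, expect_comm I Iᶜ]
    simp only [expect_doubleCenter_diag hI]
    simp only [secondDiff, expect_add_distrib, expect_sub_distrib, expect_const hI,
      expect_const hIc]
    ring
  simp only [restrictedSum, ← card_mul_expect, ← mul_expect, ← mul_assoc, centered]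

theorem restrictedSum_map (h : Fin N → Fin N → Fin N → Fin N → ℝ) (I : Finset (Fin N))
    (τ : Perm (Fin N)) :
    restrictedSum h (I.map τ.toEmbedding) = restrictedSum (relabel τ τ h) I := by
  simp only [restrictedSum, compl_map_perm, sum_map, Equiv.coe_toEmbedding, tildeD_map]

theorem restrictedSum_symmetrize {I : Finset (Fin N)} (hI : I.Nonempty) (hIc : Iᶜ.Nonempty)
    (h : Fin N → Fin N → Fin N → Fin N → ℝ) :
    restrictedSum (symmetrize h) I = 𝔼 J ∈ powersetCard #I univ, restrictedSum h J := by
  rw [← expect_perm_map]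
  simp only [restrictedSum_map, restrictedSum_eq hI hIc, ← mul_expect, secondDiff, symmetrize,
    ← expect_add_distrib, ← expect_sub_distrib, expect_comm _ univ]

theorem expect_expect_ite_eq {α : Type*} [DecidableEq α] {s : Finset α} (hs : s.Nonempty) (x : ℝ) :
    #s * 𝔼 a ∈ s, 𝔼 b ∈ s, (if a = b then 0 else x) = (#s - 1) * x := by
  have split (a b : α) : (if a = b then 0 else x) = x - if a = b then x else 0 := by
    split_ifs <;> ring
  have hs' : (#s : ℝ) ≠ 0 := by exact_mod_cast hs.card_ne_zero
  simp only [split, expect_sub_distrib, expect_const hs, mul_sub, sub_mul, one_mul]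
  simp [expect_eq_sum_div_card, ← sum_div, hs', mul_div_cancel₀]

theorem expect_restrictedSum {h : Fin N → Fin N → Fin N → Fin N → ℝ} (hdeg : IsDegenerate h)
    {I : Finset (Fin N)} (hI : I.Nonempty) (hIc : Iᶜ.Nonempty) :
    (N : ℝ) * (N - 1) * (N - 2) * (N - 3) * 𝔼 J ∈ powersetCard #I univ, restrictedSum h J =
      (#I - 1) * (#Iᶜ - 1) * decouplingCombination h := by
  have ne {i j} (hi : i ∈ I) (hj : j ∈ Iᶜ) : i ≠ j := ne_of_mem_of_not_mem hi (mem_compl.1 hj)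
  rw [← restrictedSum_symmetrize hI hIc, restrictedSum_eq hI hIc]
  calc (N : ℝ) * (N - 1) * (N - 2) * (N - 3) *
        (#I * #Iᶜ * 𝔼 a ∈ I, 𝔼 b ∈ I, 𝔼 c ∈ Iᶜ, 𝔼 e ∈ Iᶜ, secondDiff (symmetrize h) a b c e)
      = #I * (#Iᶜ * 𝔼 a ∈ I, 𝔼 b ∈ I, 𝔼 c ∈ Iᶜ, 𝔼 e ∈ Iᶜ,
          ((N : ℝ) * (N - 1) * (N - 2) * (N - 3) * secondDiff (symmetrize h) a b c e)) := by
        simp only [← mul_expect]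
        ring
    _ = #I * (#Iᶜ * 𝔼 a ∈ I, 𝔼 b ∈ I, 𝔼 c ∈ Iᶜ, 𝔼 e ∈ Iᶜ,
          if a = b then 0 else if c = e then 0 else decouplingCombination h) := by
        refine congrArg _ (congrArg _ ?_)
        exact expect_congr rfl fun a ha ↦ expect_congr rfl fun b hb ↦
          expect_congr rfl fun c hc ↦ expect_congr rfl fun e he ↦ by
            simpa using secondDiff_symmetrize hdeg (ne ha hc) (ne ha he) (ne hb hc) (ne hb he)
    _ = #I * 𝔼 a ∈ I, 𝔼 b ∈ I, if a = b then 0 else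
          #Iᶜ * 𝔼 c ∈ Iᶜ, 𝔼 e ∈ Iᶜ, if c = e then 0 else decouplingCombination h := by
        rw [mul_expect]
        refine congrArg _ (expect_congr rfl fun a _ ↦ ?_)
        rw [mul_expect]
        exact expect_congr rfl fun b _ ↦ by split_ifs <;> simp
    _ = (#I - 1) * (#Iᶜ - 1) * decouplingCombination h := by
        rw [expect_expect_ite_eq hI, expect_expect_ite_eq hIc, mul_assoc]

theorem expect_restrictedSum_relabel {I : Finset (Fin N)} (hI : I.Nonempty) (hIc : Iᶜ.Nonempty)
    (d : Fin N → Fin N → Fin N → Fin N → ℝ) :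
    𝔼 σ : Perm (Fin N), restrictedSum (relabel 1 σ d) I = 0 := by
  have swap_ab {a b c : Fin N} (hac : c ≠ a) (hbc : c ≠ b) (ψ : Fin N → Fin N → ℝ) :
      𝔼 σ : Perm (Fin N), ψ (σ b) (σ c) = 𝔼 σ : Perm (Fin N), ψ (σ a) (σ c) :=
    Fintype.expect_equiv (Equiv.mulRight (swap a b)) _ _ fun σ ↦ by
      simp [Equiv.swap_apply_of_ne_of_ne hac hbc]
  have entry {a b c e} (ha : a ∈ I) (hb : b ∈ I) (hc : c ∈ Iᶜ) (he : e ∈ Iᶜ) :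
      𝔼 σ : Perm (Fin N), secondDiff (relabel 1 σ d) a b c e = 0 := by
    have ne {i j} (hi : i ∈ I) (hj : j ∈ Iᶜ) : j ≠ i :=
      (ne_of_mem_of_not_mem hi (mem_compl.1 hj)).symm
    simp only [secondDiff, relabel, Perm.coe_one, id_eq, expect_add_distrib, expect_sub_distrib]
    rw [swap_ab (ne ha hc) (ne hb hc) (d a c), swap_ab (ne ha he) (ne hb he) (d a c)]
    ring
  simp only [restrictedSum_eq hI hIc, ← mul_expect, expect_comm univ]
  refine mul_eq_zero_of_right _ ?_
  exact expect_eq_zero fun a ha ↦ expect_eq_zero fun b hb ↦ expect_eq_zero fun c hc ↦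
    expect_eq_zero fun e he ↦ entry ha hb hc he

theorem expect_exp_restrictedSum (d : Fin N → Fin N → Fin N → Fin N → ℝ) (I : Finset (Fin N))
    (t : ℝ) :
    𝔼 J ∈ powersetCard #I univ, 𝔼 f ∈ bijSet I J, 𝔼 g ∈ bijSet Iᶜ Jᶜ,
        exp (t * ∑ i ∈ I, ∑ j ∈ Iᶜ, tildeD d I J i j (f i) (g j)) =
      𝔼 σ : Perm (Fin N), exp (t * restrictedSum (relabel 1 σ d) I) := by
  have local_dependence (J : Finset (Fin N)) (f f' g g' : Fin N → Fin N) (hf : Set.EqOn f f' I)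
      (hg : Set.EqOn g g' ↑Iᶜ) :
      exp (t * ∑ i ∈ I, ∑ j ∈ Iᶜ, tildeD d I J i j (f i) (g j)) =
        exp (t * ∑ i ∈ I, ∑ j ∈ Iᶜ, tildeD d I J i j (f' i) (g' j)) := by
    refine congrArg _ (congrArg _ (sum_congr rfl fun i hi ↦ sum_congr rfl fun j hj ↦ ?_))
    rw [hf hi, hg (mem_coe.2 hj)]
  rw [expect_expect_bijSet I local_dependence]
  refine expect_congr rfl fun σ _ ↦ ?_
  have relabel_map (i j : Fin N) : tildeD d I (I.map σ.toEmbedding) i j (σ i) (σ j) =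
      tildeD (relabel 1 σ d) I I i j i j := by
    simpa only [Perm.one_def, Equiv.refl_toEmbedding, map_refl, Equiv.refl_apply] using
      tildeD_map d I I 1 σ i j i j
  simp only [restrictedSum, relabel_map]

end CenteredRestriction

section DecouplingInequality

theorem permExp_eq_expect {N : ℕ} (f : Perm (Fin N) → ℝ) : permExp N f = 𝔼 σ, f σ := by
  rw [permExp, Fintype.expect_eq_sum_div_card, Fintype.card_perm, Fintype.card_fin]

/-- The squared Hilbert–Schmidt norm of a fourth-order tensor, which is `N² Ṽ`. -/
def sumSq {α : Type*} [Fintype α] (d : α → α → α → α → ℝ) : ℝ :=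
  ∑ i, ∑ j, ∑ k, ∑ l, d i j k l ^ 2

theorem sum_sq_comp_le_sumSq {α ι : Type*} [Fintype α] [Fintype ι] (d : α → α → α → α → ℝ)
    {φ : ι → α × α × α × α} (hφ : φ.Injective) :
    ∑ x, d (φ x).1 (φ x).2.1 (φ x).2.2.1 (φ x).2.2.2 ^ 2 ≤ sumSq d := by
  simp only [sumSq, ← Fintype.sum_prod_type']
  let F (q : α × α × α × α) : ℝ := d q.1 q.2.1 q.2.2.1 q.2.2.2 ^ 2
  calc ∑ x, F (φ x) = ∑ q ∈ univ.map ⟨φ, hφ⟩, F q := (sum_map _ ⟨φ, hφ⟩ F).symm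
    _ ≤ ∑ q, F q := sum_le_univ_sum_of_nonneg fun _ ↦ sq_nonneg _

/-- The random variable `X`, on a uniform finite sample space, recentered to have mean zero. -/
noncomputable def centered {Ω : Type*} [Fintype Ω] (X : Ω → ℝ) (ω : Ω) : ℝ := X ω - 𝔼 ω', X ω'

variable {N : ℕ} (d : Fin N → Fin N → Fin N → Fin N → ℝ)

theorem expect_exp_diagSum_le (s : ℝ) :
    𝔼 σ : Perm (Fin N), exp (s * centered (fun σ ↦ diagSum (relabel 1 σ d)) σ) ≤
      exp (s ^ 2 * sumSq d) := by
  set e : Fin N → Fin N → ℝ := fun i k ↦ s * d i i k k with he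
  have mean : s * 𝔼 σ : Perm (Fin N), diagSum (relabel 1 σ d) = (∑ i, ∑ k, e i k) / N := by
    have entry (i : Fin N) : 𝔼 σ : Perm (Fin N), d i i (σ i) (σ i) = 𝔼 k, d i i k k :=
      expect_perm_apply (fun k ↦ d i i k k) i
    simp only [diagSum, relabel, expect_sum_comm, Perm.one_apply, entry]
    simp only [Fintype.expect_eq_sum_div_card, Fintype.card_fin, ← sum_div, he, ← mul_sum,
      mul_div_assoc]
  have squares : ∑ i, ∑ k, e i k ^ 2 ≤ s ^ 2 * sumSq d := by
    simp only [he, mul_pow, ← mul_sum, ← Fintype.sum_prod_type']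
    refine mul_le_mul_of_nonneg_left ?_ (sq_nonneg s)
    exact sum_sq_comp_le_sumSq d (φ := fun p : Fin N × Fin N ↦ (p.1, p.1, p.2, p.2))
      fun p q h ↦ by grind
  calc 𝔼 σ : Perm (Fin N), exp (s * centered (fun σ ↦ diagSum (relabel 1 σ d)) σ)
      = exp (-((∑ i, ∑ k, e i k) / N)) * 𝔼 σ : Perm (Fin N), exp (∑ i, e i (σ i)) := by
        simp only [centered, mul_sub, mean, mul_expect, ← exp_add, neg_add_eq_sub, he, ← mul_sum]
        rfl
    _ ≤ exp (-((∑ i, ∑ k, e i k) / N)) *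
          exp ((∑ i, ∑ k, e i k) / N + ∑ i, ∑ k, e i k ^ 2) := by
        gcongr
        exact combinatorialMGFBound N e
    _ ≤ exp (s ^ 2 * sumSq d) := by
        rw [← exp_add, neg_add_cancel_left]
        exact exp_le_exp.2 squares

theorem crossSum_sq_le (σ : Perm (Fin N)) : crossSum (relabel 1 σ d) ^ 2 ≤ N ^ 2 * sumSq d := by
  calc crossSum (relabel 1 σ d) ^ 2 = (∑ p : Fin N × Fin N, d p.1 p.2 (σ p.2) (σ p.1)) ^ 2 := by
        rw [Fintype.sum_prod_type]; rfl
    _ ≤ N ^ 2 * ∑ p : Fin N × Fin N, d p.1 p.2 (σ p.2) (σ p.1) ^ 2 := by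
        simpa [sq] using sq_sum_le_card_mul_sum_sq (s := univ)
          (f := fun p : Fin N × Fin N ↦ d p.1 p.2 (σ p.2) (σ p.1))
    _ ≤ N ^ 2 * sumSq d := by
        gcongr
        exact sum_sq_comp_le_sumSq d (φ := fun p : Fin N × Fin N ↦ (p.1, p.2, σ p.2, σ p.1))
          fun p q h ↦ by grind

theorem expect_exp_crossSum_le (s : ℝ) :
    𝔼 σ : Perm (Fin N), exp (s * centered (fun σ ↦ crossSum (relabel 1 σ d)) σ) ≤
      exp (s ^ 2 * (N ^ 2 * sumSq d) / 2) := by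
  set M := √((s * N) ^ 2 * sumSq d) with hM
  have sumSq_nonneg : 0 ≤ sumSq d := by unfold sumSq; positivity
  have M_sq : M ^ 2 = s ^ 2 * (N ^ 2 * sumSq d) := by
    rw [hM, sq_sqrt (by positivity)]
    ring
  set m := 𝔼 σ : Perm (Fin N), crossSum (relabel 1 σ d) with hm
  have bounded (σ : Perm (Fin N)) :
      s * centered (fun σ ↦ crossSum (relabel 1 σ d)) σ ∈ Set.Icc (-M - s * m) (M - s * m) := by
    have : |s * crossSum (relabel 1 σ d)| ≤ M := abs_le_sqrt <| by
      rw [mul_pow, mul_pow, mul_assoc]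
      exact mul_le_mul_of_nonneg_left (crossSum_sq_le d σ) (sq_nonneg s)
    rw [centered, ← hm, mul_sub, Set.mem_Icc]
    exact ⟨sub_le_sub_right (abs_le.1 this).1 _, sub_le_sub_right (abs_le.1 this).2 _⟩
  have mean_zero : 𝔼 σ, s * centered (fun σ : Perm (Fin N) ↦ crossSum (relabel 1 σ d)) σ = 0 := by
    simp only [centered, ← mul_expect, expect_sub_distrib, Fintype.expect_const, sub_self, mul_zero]
  refine (expect_exp_le_of_mem_Icc bounded).trans_eq ?_
  rw [mean_zero, ← M_sq]
  ring_nf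

theorem pairSum_relabel (σ : Perm (Fin N)) : pairSum (relabel 1 σ d) = pairSum d :=
  sum_congr rfl fun i _ ↦ Equiv.sum_comp σ fun j ↦ d i i j j

/-- The mean of `restrictedSum h J` over the subsets `J` of size `n`. -/
noncomputable def meanRestrictedSum (n : ℕ) (h : Fin N → Fin N → Fin N → Fin N → ℝ) : ℝ :=
  𝔼 J ∈ powersetCard n univ, restrictedSum h J

/-- The exponential moment `E exp(t ∑_{i ∈ I, j ∉ I} d̃_{I,J}(i, j, π₁ i, π₂ j))` of the decoupled
sum, for random subsets `I`, `J` of size `n` and random bijections `π₁ : I → J`, `π₂ : Iᶜ → Jᶜ`. -/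
noncomputable def decoupledMGF (n : ℕ) (t : ℝ) : ℝ :=
  𝔼 I ∈ powersetCard n univ, 𝔼 J ∈ powersetCard n univ, 𝔼 f ∈ bijSet I J, 𝔼 g ∈ bijSet Iᶜ Jᶜ,
    exp (t * ∑ i ∈ I, ∑ j ∈ Iᶜ, tildeD d I J i j (f i) (g j))

theorem decoupledMGF_eq (n : ℕ) (t : ℝ) :
    decoupledMGF d n t =
      (∑ I ∈ powersetCard n univ, ∑ J ∈ powersetCard n univ,
        (∑ f ∈ bijSet I J, ∑ g ∈ bijSet Iᶜ Jᶜ,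
          exp (t * ∑ i ∈ I, ∑ j ∈ Iᶜ, tildeD d I J i j (f i) (g j)))
        / ((#(bijSet I J) : ℝ) * #(bijSet Iᶜ Jᶜ)))
      / (#(powersetCard n (univ : Finset (Fin N))) : ℝ) ^ 2 := by
  unfold decoupledMGF
  simp only [expect_eq_sum_div_card, sum_div, div_div, sq]
  congr! 5
  ring

variable {d} {n : ℕ}

theorem nonempty_of_mem_powersetCard (hn₀ : 0 < n) (hnN : n < N) {I : Finset (Fin N)}
    (hI : I ∈ powersetCard n univ) : I.Nonempty ∧ Iᶜ.Nonempty := by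
  rw [mem_powersetCard_univ] at hI
  constructor <;> rw [← card_pos]
  · omega
  · rw [card_compl, Fintype.card_fin]
    omega

theorem meanRestrictedSum_eq {h : Fin N → Fin N → Fin N → Fin N → ℝ} (hdeg : IsDegenerate h)
    (hn₀ : 0 < n) (hnN : n < N) :
    (N : ℝ) * (N - 1) * (N - 2) * (N - 3) * meanRestrictedSum n h =
      (n - 1) * (N - n - 1) * decouplingCombination h := by
  obtain ⟨I, hI⟩ : (powersetCard n (univ : Finset (Fin N))).Nonempty :=
    powersetCard_nonempty.2 (by simpa using hnN.le)
  obtain ⟨hI₀, hIc⟩ := nonempty_of_mem_powersetCard hn₀ hnN hI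
  have card_I := mem_powersetCard_univ.1 hI
  have card_Ic : (#Iᶜ : ℝ) = N - n := by
    rw [card_compl, Fintype.card_fin, card_I, Nat.cast_sub hnN.le]
  simpa only [card_I, card_Ic, meanRestrictedSum] using expect_restrictedSum hdeg hI₀ hIc

theorem expect_meanRestrictedSum (hn₀ : 0 < n) (hnN : n < N) :
    𝔼 σ : Perm (Fin N), meanRestrictedSum n (relabel 1 σ d) = 0 := by
  unfold meanRestrictedSum
  rw [expect_comm]
  refine expect_eq_zero fun I hI ↦ ?_
  obtain ⟨hI₀, hIc⟩ := nonempty_of_mem_powersetCard hn₀ hnN hI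
  exact expect_restrictedSum_relabel hI₀ hIc d

theorem expect_exp_meanRestrictedSum_le (hnN : n ≤ N) (t : ℝ) :
    𝔼 σ : Perm (Fin N), exp (t * meanRestrictedSum n (relabel 1 σ d)) ≤ decoupledMGF d n t := by
  have nonempty : (powersetCard n (univ : Finset (Fin N))).Nonempty :=
    powersetCard_nonempty.2 (by simpa using hnN)
  calc 𝔼 σ : Perm (Fin N), exp (t * meanRestrictedSum n (relabel 1 σ d))
      ≤ 𝔼 σ : Perm (Fin N), 𝔼 I ∈ powersetCard n univ,
          exp (t * restrictedSum (relabel 1 σ d) I) := by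
        refine expect_le_expect fun σ _ ↦ ?_
        rw [meanRestrictedSum, mul_expect]
        exact exp_expect_le nonempty _
    _ = 𝔼 I ∈ powersetCard n univ, 𝔼 σ : Perm (Fin N),
          exp (t * restrictedSum (relabel 1 σ d) I) := expect_comm _ _ _
    _ = decoupledMGF d n t := expect_congr rfl fun I hI ↦ by
        rw [← expect_exp_restrictedSum, mem_powersetCard_univ.1 hI]

theorem split_ratio_le (hN : 13 ≤ N) (hn : n = (N + 1) / 2) :
    2 * ((N : ℝ) * (N - 1) * (N - 2) * (N - 3)) ≤
      9 * ((N : ℝ) ^ 2 - 3 * N + 1) * ((n - 1) * (N - n - 1)) := by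
  have hN' : (13 : ℝ) ≤ N := by exact_mod_cast hN
  have balanced : ((N : ℝ) - 1) * (N - 3) ≤ 4 * ((n - 1) * (N - n - 1)) := by
    obtain hparity | hparity : N = 2 * n ∨ N + 1 = 2 * n := by omega
    · have : (N : ℝ) = 2 * n := by exact_mod_cast hparity
      nlinarith
    · have : (N : ℝ) + 1 = 2 * n := by exact_mod_cast hparity
      nlinarith
  have : 8 * ((N : ℝ) * (N - 2)) ≤ 9 * ((N : ℝ) ^ 2 - 3 * N + 1) := by nlinarith
  calc 2 * ((N : ℝ) * (N - 1) * (N - 2) * (N - 3))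
      = 8 * (N * (N - 2)) * ((N - 1) * (N - 3)) / 4 := by ring
    _ ≤ 9 * ((N : ℝ) ^ 2 - 3 * N + 1) * (4 * ((n - 1) * (N - n - 1))) / 4 := by
        gcongr ?_ / 4
        exact mul_le_mul this balanced (mul_nonneg (by linarith) (by linarith)) (by nlinarith)
    _ = 9 * ((N : ℝ) ^ 2 - 3 * N + 1) * ((n - 1) * (N - n - 1)) := by ring

theorem expect_decouplingCombination_relabel (hdeg : IsDegenerate d) (hN : 4 ≤ N) :
    𝔼 σ : Perm (Fin N), decouplingCombination (relabel 1 σ d) = 0 := by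
  have hN' : (4 : ℝ) ≤ N := by exact_mod_cast hN
  have scaled : ((2 : ℕ) - 1) * (N - (2 : ℕ) - 1) *
      𝔼 σ : Perm (Fin N), decouplingCombination (relabel 1 σ d) = 0 := by
    simp only [mul_expect, ← meanRestrictedSum_eq (hdeg.relabel 1 _) two_pos (by omega : 2 < N)]
    rw [← mul_expect, expect_meanRestrictedSum two_pos (by omega), mul_zero]
  refine (mul_eq_zero.1 scaled).resolve_left (ne_of_gt ?_)
  push_cast
  linarith

theorem expect_exp_decouplingCombination_le (hdeg : IsDegenerate d) (hN : 13 ≤ N)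
    (hn : n = (N + 1) / 2) (t : ℝ) :
    𝔼 σ : Perm (Fin N),
        exp (2 * (t / ((N : ℝ) ^ 2 - 3 * N + 1) * decouplingCombination (relabel 1 σ d))) ≤
      decoupledMGF d n (9 * t) := by
  have hN' : (13 : ℝ) ≤ N := by exact_mod_cast hN
  set P : ℝ := N * (N - 1) * (N - 2) * (N - 3) with hP
  set q : ℝ := (N : ℝ) ^ 2 - 3 * N + 1
  set ρ : ℝ := (n - 1) * (N - n - 1) with hρ
  have P_pos : 0 < P := by
    have h₁ : (0 : ℝ) < N - 1 := by linarith
    have h₂ : (0 : ℝ) < N - 2 := by linarith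
    have h₃ : (0 : ℝ) < N - 3 := by linarith
    positivity
  have q_pos : 0 < q := by nlinarith
  have ratio : 2 * P ≤ 9 * q * ρ := split_ratio_le hN hn
  have ρ_pos : 0 < ρ := pos_of_mul_pos_right (by linarith) (by positivity : 0 ≤ 9 * q)
  have rescale (σ : Perm (Fin N)) : 2 * (t / q * decouplingCombination (relabel 1 σ d)) =
      2 * P / (9 * q * ρ) * (9 * t * meanRestrictedSum n (relabel 1 σ d)) := by
    have := meanRestrictedSum_eq (n := n) (hdeg.relabel 1 σ) (by omega) (by omega)
    rw [← hP, ← hρ] at this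
    field_simp
    linear_combination -t * this
  simp only [rescale]
  refine (expect_exp_mul_le_of_expect_eq_zero ?_ (by positivity)
    ((div_le_one (by positivity)).2 ratio)).trans (expect_exp_meanRestrictedSum_le (by omega) _)
  rw [← mul_expect, expect_meanRestrictedSum (by omega) (by omega), mul_zero]

theorem centered_offDiagSum_eq (hdeg : IsDegenerate d) (hN : 4 ≤ N) (σ : Perm (Fin N)) :
    ((N : ℝ) ^ 2 - 3 * N + 1) * centered (fun σ ↦ offDiagSum (relabel 1 σ d)) σ =
      decouplingCombination (relabel 1 σ d)
        + ((2 * N - 1) * centered (fun σ ↦ diagSum (relabel 1 σ d)) σ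
          - centered (fun σ ↦ crossSum (relabel 1 σ d)) σ) := by
  have mean_zero := expect_decouplingCombination_relabel hdeg hN
  simp only [decouplingCombination, pairSum_relabel, expect_add_distrib, expect_sub_distrib,
    ← mul_expect, Fintype.expect_const, Fintype.card_fin] at mean_zero ⊢
  simp only [centered]
  linear_combination -mean_zero

theorem remainder_ratio_le (hN : 13 ≤ N) :
    (8 * ((N : ℝ) * (2 * N - 1)) ^ 2 + 4 * ((N : ℝ) ^ 2) ^ 2) / ((N : ℝ) ^ 2 - 3 * N + 1) ^ 2 ≤
      100 := by
  have hN' : (13 : ℝ) ≤ N := by exact_mod_cast hN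
  set q : ℝ := (N : ℝ) ^ 2 - 3 * N + 1
  have q_pos : 0 < q := by nlinarith
  have diag_coeff : (N : ℝ) * (2 * N - 1) ≤ 5 / 2 * q := by nlinarith
  have cross_coeff : (N : ℝ) ^ 2 ≤ 7 / 2 * q := by nlinarith
  have diag_sq := pow_le_pow_left₀ (mul_nonneg (by linarith) (by linarith)) diag_coeff 2
  have cross_sq := pow_le_pow_left₀ (sq_nonneg _) cross_coeff 2
  rw [div_le_iff₀ (by positivity)]
  linarith

theorem expect_exp_diagSum_sub_crossSum_le (hN : 13 ≤ N) (t : ℝ) :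
    𝔼 σ : Perm (Fin N), exp (2 * (t / ((N : ℝ) ^ 2 - 3 * N + 1) *
        ((2 * N - 1) * centered (fun σ ↦ diagSum (relabel 1 σ d)) σ
          - centered (fun σ ↦ crossSum (relabel 1 σ d)) σ))) ≤
      exp (100 * (sumSq d / N ^ 2) * t ^ 2) := by
  have hN' : (13 : ℝ) ≤ N := by exact_mod_cast hN
  set q : ℝ := (N : ℝ) ^ 2 - 3 * N + 1
  have q_pos : 0 < q := by nlinarith
  have sumSq_nonneg : 0 ≤ sumSq d := by unfold sumSq; positivity
  set a : ℝ := 4 * t * (2 * N - 1) / q with ha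
  set b : ℝ := -(4 * t) / q with hb
  calc _ = 𝔼 σ : Perm (Fin N), exp (a / 2 * centered (fun σ ↦ diagSum (relabel 1 σ d)) σ +
          b / 2 * centered (fun σ ↦ crossSum (relabel 1 σ d)) σ) := by
        refine expect_congr rfl fun σ _ ↦ congrArg _ ?_
        rw [ha, hb]
        ring
    _ ≤ √(exp (a ^ 2 * sumSq d)) * √(exp (b ^ 2 * (N ^ 2 * sumSq d) / 2)) := by
        refine (expect_exp_add_le _ _).trans ?_
        gcongr
        · simpa only [← mul_assoc, mul_div_cancel₀ a two_ne_zero] using expect_exp_diagSum_le d a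
        · simpa only [← mul_assoc, mul_div_cancel₀ b two_ne_zero] using expect_exp_crossSum_le d b
    _ = exp ((8 * ((N : ℝ) * (2 * N - 1)) ^ 2 + 4 * ((N : ℝ) ^ 2) ^ 2) / q ^ 2 *
          (sumSq d / N ^ 2) * t ^ 2) := by
        rw [← exp_half, ← exp_half, ← exp_add, ha, hb]
        congr 1
        field_simp
        ring
    _ ≤ exp (100 * (sumSq d / N ^ 2) * t ^ 2) := by
        gcongr
        exact remainder_ratio_le hN

theorem combinatorial_decoupling_general (N : ℕ) (hN : 13 ≤ N)
    (d : Fin N → Fin N → Fin N → Fin N → ℝ)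
    (hdeg1 : ∀ i j k, ∑ l, d i j k l = 0)
    (hdeg2 : ∀ i j l, ∑ k, d i j k l = 0)
    (hdeg3 : ∀ i k l, ∑ j, d i j k l = 0)
    (hdeg4 : ∀ j k l, ∑ i, d i j k l = 0)
    (N₁ : ℕ) (hN₁ : N₁ = (N + 1) / 2)
    (Vt : ℝ) (hV : Vt = (∑ i, ∑ j, ∑ k, ∑ l, (d i j k l) ^ 2) / (N : ℝ) ^ 2)
    (lam : ℝ) :
    permExp N (fun σ => Real.exp (lam *
        ((∑ p ∈ (Finset.univ : Finset (Fin N)).offDiag, d p.1 p.2 (σ p.1) (σ p.2))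
          - permExp N (fun σ' =>
              ∑ p ∈ (Finset.univ : Finset (Fin N)).offDiag, d p.1 p.2 (σ' p.1) (σ' p.2)))))
      ≤ Real.exp (50 * Vt * lam ^ 2) *
        Real.sqrt
          ((∑ I ∈ Finset.powersetCard N₁ (Finset.univ : Finset (Fin N)),
            ∑ J ∈ Finset.powersetCard N₁ (Finset.univ : Finset (Fin N)),
              (∑ f ∈ bijSet I J, ∑ g ∈ bijSet Iᶜ Jᶜ,
                  Real.exp (9 * lam * ∑ i ∈ I, ∑ j ∈ Iᶜ, tildeD d I J i j (f i) (g j)))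
                / (((bijSet I J).card : ℝ) * ((bijSet Iᶜ Jᶜ).card : ℝ)))
            / ((Finset.powersetCard N₁ (Finset.univ : Finset (Fin N))).card : ℝ) ^ 2) := by
  have hdeg : IsDegenerate d := ⟨hdeg4, hdeg3, hdeg2, hdeg1⟩
  have hN' : (13 : ℝ) ≤ N := by exact_mod_cast hN
  set q : ℝ := (N : ℝ) ^ 2 - 3 * N + 1 with hq
  have q_pos : 0 < q := by nlinarith
  set leading : Perm (Fin N) → ℝ := fun σ ↦ decouplingCombination (relabel 1 σ d)
  set remainder : Perm (Fin N) → ℝ := fun σ ↦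
    (2 * N - 1) * centered (fun σ ↦ diagSum (relabel 1 σ d)) σ
      - centered (fun σ ↦ crossSum (relabel 1 σ d)) σ
  have decomposition (σ : Perm (Fin N)) :
      lam * centered (fun σ ↦ offDiagSum (relabel 1 σ d)) σ =
        lam / q * leading σ + lam / q * remainder σ := by
    rw [← mul_add, ← centered_offDiagSum_eq hdeg (by omega), ← mul_assoc, ← hq,
      div_mul_cancel₀ _ q_pos.ne']
  simp only [permExp_eq_expect]
  rw [← decoupledMGF_eq, hV, mul_comm]
  calc 𝔼 σ : Perm (Fin N), exp (lam * centered (fun σ ↦ offDiagSum (relabel 1 σ d)) σ)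
      ≤ √(𝔼 σ, exp (2 * (lam / q * leading σ))) * √(𝔼 σ, exp (2 * (lam / q * remainder σ))) := by
        simp only [decomposition]
        exact expect_exp_add_le _ _
    _ ≤ √(decoupledMGF d N₁ (9 * lam)) * √(exp (100 * (sumSq d / N ^ 2) * lam ^ 2)) := by
        gcongr
        · exact expect_exp_decouplingCombination_le hdeg hN hN₁ lam
        · exact expect_exp_diagSum_sub_crossSum_le hN lam
    _ = √(decoupledMGF d N₁ (9 * lam)) * exp (50 * (sumSq d / N ^ 2) * lam ^ 2) := by
        rw [← exp_half]
        ring_nf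

end DecouplingInequality

/-- Combinatorial decoupling. -/
theorem combinatorial_decoupling (N : ℕ) (hN : 20 ≤ N)
    (d : Fin N → Fin N → Fin N → Fin N → ℝ)
    (hdeg1 : ∀ i j k, ∑ l, d i j k l = 0)
    (hdeg2 : ∀ i j l, ∑ k, d i j k l = 0)
    (hdeg3 : ∀ i k l, ∑ j, d i j k l = 0)
    (hdeg4 : ∀ j k l, ∑ i, d i j k l = 0)
    (N₁ : ℕ) (hN₁ : N₁ = (N + 1) / 2)
    (Vt : ℝ) (hV : Vt = (∑ i, ∑ j, ∑ k, ∑ l, (d i j k l) ^ 2) / (N : ℝ) ^ 2)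
    (lam : ℝ) (hlam : 0 ≤ lam) :
    permExp N (fun σ => Real.exp (lam *
        ((∑ p ∈ (Finset.univ : Finset (Fin N)).offDiag, d p.1 p.2 (σ p.1) (σ p.2))
          - permExp N (fun σ' =>
              ∑ p ∈ (Finset.univ : Finset (Fin N)).offDiag, d p.1 p.2 (σ' p.1) (σ' p.2)))))
      ≤ Real.exp (50 * Vt * lam ^ 2) *
        Real.sqrt
          ((∑ I ∈ Finset.powersetCard N₁ (Finset.univ : Finset (Fin N)),
            ∑ J ∈ Finset.powersetCard N₁ (Finset.univ : Finset (Fin N)),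
              (∑ f ∈ bijSet I J, ∑ g ∈ bijSet Iᶜ Jᶜ,
                  Real.exp (9 * lam * ∑ i ∈ I, ∑ j ∈ Iᶜ, tildeD d I J i j (f i) (g j)))
                / (((bijSet I J).card : ℝ) * ((bijSet Iᶜ Jᶜ).card : ℝ)))
            / ((Finset.powersetCard N₁ (Finset.univ : Finset (Fin N))).card : ℝ) ^ 2) :=
  combinatorial_decoupling_general N (by omega) d hdeg1 hdeg2 hdeg3 hdeg4 N₁ hN₁ Vt hV lam
end

section
/- Let N, M be positive integers, let π be uniformly distributed on S_N and τ uniformly distributed on S_M, independent of each other. Let D = [d(i,j,k,ℓ)] ∈ R^{N×M×N×M} be a (possibly random) tensor, independent of (π,τ), satisfying almost surely, for all i,k ∈ [N] and j,ℓ ∈ [M]: Σ_{j'∈[M], ℓ'∈[M]} d(i,j',k,ℓ') = 0 and Σ_{i'∈[N], k'∈[N]} d(i',j,k',ℓ) = 0. Let G_1,...,G_N, G'_1,...,G'_M be i.i.d. standard Gaussian random variables independent of (D,π,τ). Then for every λ ≥ 0: E[ exp( λ Σ_{i∈[N], j∈[M]} d(i,j,π(i),τ(j)) ) ] ≤ E[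 exp( 12 λ Σ_{i∈[N], j∈[M]} d(i,j,π(i),τ(j)) G_i G'_j ) ]. -/
/-!
For a square array `d`, right multiplication by a transposition makes a uniform permutation `σ`
into an exchangeable pair, so Stein's method bounds `𝔼 X exp (θ X)`, where `X` is the centered
statistic `∑ i, d i (σ i)`, in terms of the random variance proxy `∑ i, d i (σ i) ^ 2` and its mean.
Gibbs' variational principle decouples the proxy from `exp (θ X)`, and Herbst's argument then gives
`𝔼 exp X ≤ 𝔼 exp (6 ∑ i, d i (σ i) ^ 2)`. The right-hand side is the Gaussian moment generating
function of `∑ i, √12 d i (σ i) G i`. Applying this conditionally, to the rows and then to the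
columns of a doubly centered tensor, produces the constant `12 = √12 * √12`.
-/

open scoped BigOperators Classical ENNReal
open MeasureTheory ProbabilityTheory

/-- Standard Gaussian product measure on `Fin n → ℝ` (i.i.d. `N(0,1)` coordinates). -/
noncomputable def gaussPi (n : ℕ) : Measure (Fin n → ℝ) :=
  Measure.pi (fun _ : Fin n => gaussianReal 0 1)

section FiniteExpectation

variable {ι : Type*} [Fintype ι]

lemma exp_expect_le_expect_exp [Nonempty ι] (f : ι → ℝ) :
    Real.exp (𝔼 s, f s) ≤ 𝔼 s, Real.exp (f s) := by
  have hcard : ∑ _s : ι, (Fintype.card ι : ℝ)⁻¹ = 1 := by simp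
  have jensen := convexOn_exp.map_sum_le (t := Finset.univ) (p := f) (fun _ _ ↦ by positivity)
    hcard fun _ _ ↦ Set.mem_univ _
  simpa only [smul_eq_mul, ← Finset.mul_sum, Fintype.expect_eq_sum_div_card, div_eq_inv_mul]
    using jensen

lemma expect_exp_add_expect_le [Nonempty ι] (f : ι → ℝ) :
    𝔼 s, Real.exp (f s + 𝔼 t, f t) ≤ 𝔼 s, Real.exp (2 * f s) := by
  set m := 𝔼 t, f t with hm
  have jensen : Real.exp (2 * m) ≤ 𝔼 s, Real.exp (2 * f s) := by
    simpa only [hm, Finset.mul_expect] using exp_expect_le_expect_exp fun s ↦ 2 * f s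
  have am_gm (s : ι) :
      Real.exp (f s + m) ≤ (Real.exp (2 * f s) + Real.exp (2 * m)) / 2 := by
    rw [Real.exp_add, two_mul, two_mul, Real.exp_add, Real.exp_add]
    linarith [sq_nonneg (Real.exp (f s) - Real.exp m)]
  calc 𝔼 s, Real.exp (f s + m)
      ≤ 𝔼 s, (Real.exp (2 * f s) + Real.exp (2 * m)) / 2 :=
        Finset.expect_le_expect fun s _ ↦ am_gm s
    _ = (𝔼 s, Real.exp (2 * f s) + Real.exp (2 * m)) / 2 := by
        rw [← Finset.expect_div, Finset.expect_add_distrib, Fintype.expect_const]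
    _ ≤ 𝔼 s, Real.exp (2 * f s) := by linarith

-- Jensen's inequality for `exp (U - Y)` under the weights proportional to `exp Y`.
lemma expect_sub_mul_exp_le_mul_log_div [Nonempty ι] (U Y : ι → ℝ) :
    𝔼 s, (U s - Y s) * Real.exp (Y s) ≤
      (𝔼 s, Real.exp (Y s)) *
        Real.log ((𝔼 s, Real.exp (U s)) / 𝔼 s, Real.exp (Y s)) := by
  have hcard : (0 : ℝ) < Fintype.card ι := by exact_mod_cast Fintype.card_pos
  have sum_exp_pos (f : ι → ℝ) : 0 < ∑ s, Real.exp (f s) :=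
    Finset.sum_pos (fun _ _ ↦ Real.exp_pos _) Finset.univ_nonempty
  have hZ := sum_exp_pos Y
  have jensen := convexOn_exp.map_sum_le (t := Finset.univ) (p := fun s ↦ U s - Y s)
    (w := fun s ↦ Real.exp (Y s) / ∑ t, Real.exp (Y t)) (fun _ _ ↦ by positivity)
    (by rw [← Finset.sum_div, div_self hZ.ne']) fun _ _ ↦ Set.mem_univ _
  simp only [smul_eq_mul, div_mul_eq_mul_div, ← Real.exp_add, add_sub_cancel, ← Finset.sum_div]
    at jensen
  rw [← Real.le_log_iff_exp_le (div_pos (sum_exp_pos U) hZ), div_le_iff₀' hZ] at jensen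
  simp only [Fintype.expect_eq_sum_div_card, div_div_div_cancel_right₀ hcard.ne',
    div_mul_eq_mul_div, mul_comm (U _ - Y _)]
  gcongr

lemma hasDerivAt_expect_exp_mul (X : ι → ℝ) (θ : ℝ) :
    HasDerivAt (fun t ↦ 𝔼 s, Real.exp (t * X s)) (𝔼 s, X s * Real.exp (θ * X s)) θ := by
  simp only [Fintype.expect_eq_sum_div_card, mul_comm (X _)]
  refine (HasDerivAt.fun_sum fun s _ ↦ ?_).div_const _
  exact (hasDerivAt_mul_const (X s)).exp

-- Herbst's argument: the hypothesis makes `t ↦ 𝔼 exp (t X) · exp (- K t²)` nonincreasing.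
lemma expect_exp_mul_le_of_expect_mul_exp_le [Nonempty ι] (X : ι → ℝ) {K T : ℝ} (hT : 0 ≤ T)
    (h : ∀ θ ∈ Set.Ioo 0 T,
      𝔼 s, X s * Real.exp (θ * X s) ≤ 2 * θ * K * 𝔼 s, Real.exp (θ * X s)) :
    𝔼 s, Real.exp (T * X s) ≤ Real.exp (K * T ^ 2) := by
  let F : ℝ → ℝ := fun θ ↦ (𝔼 s, Real.exp (θ * X s)) * Real.exp (-(K * θ ^ 2))
  have hF (θ : ℝ) : HasDerivAt F
      ((𝔼 s, X s * Real.exp (θ * X s) - 2 * θ * K * 𝔼 s, Real.exp (θ * X s)) *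
        Real.exp (-(K * θ ^ 2))) θ := by
    have hexponent : HasDerivAt (fun θ : ℝ ↦ -(K * θ ^ 2)) (-(K * (2 * θ))) θ := by
      simpa using ((hasDerivAt_pow 2 θ).const_mul K).fun_neg
    exact ((hasDerivAt_expect_exp_mul X θ).fun_mul hexponent.exp).congr_deriv (by ring)
  have hanti : AntitoneOn F (Set.Icc 0 T) := by
    refine antitoneOn_of_deriv_nonpos (convex_Icc 0 T)
      (fun θ _ ↦ (hF θ).continuousAt.continuousWithinAt)
      (fun θ _ ↦ (hF θ).differentiableAt.differentiableWithinAt) fun θ hθ ↦ ?_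
    rw [interior_Icc] at hθ
    rw [(hF θ).deriv]
    exact mul_nonpos_of_nonpos_of_nonneg (sub_nonpos.mpr (h θ hθ)) (Real.exp_pos _).le
  have hle : F T ≤ F 0 := hanti (Set.left_mem_Icc.mpr hT) (Set.right_mem_Icc.mpr hT) hT
  simpa [F, Real.exp_neg, mul_inv_le_iff₀ (Real.exp_pos _)] using hle

lemma sub_mul_exp_sub_exp_le (x y : ℝ) :
    (x - y) * (Real.exp x - Real.exp y) ≤ (x - y) ^ 2 * (Real.exp x + Real.exp y) / 2 := by
  wlog hyx : y ≤ x generalizing x y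
  · linarith [this y x (le_of_not_ge hyx)]
  have trapezoid {t : ℝ} (ht : 0 ≤ t) : 2 * (Real.exp t - 1) ≤ t * (Real.exp t + 1) := by
    have hlog := Real.le_log_one_add_of_nonneg (sub_nonneg.mpr (Real.one_le_exp ht))
    rw [add_sub_cancel, Real.log_exp, div_le_iff₀ (by linarith [Real.exp_pos t])] at hlog
    linarith
  have hxy : Real.exp x = Real.exp (x - y) * Real.exp y := by rw [← Real.exp_add, sub_add_cancel]
  have hscaled := mul_le_mul_of_nonneg_left (trapezoid (sub_nonneg.mpr hyx))
    (mul_nonneg (sub_nonneg.mpr hyx) (Real.exp_pos y).le)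
  rw [hxy]
  linarith

-- `(s, e s)` is an exchangeable pair for the uniform law of `s`, so both sides can be symmetrized.
lemma expect_sub_mul_exp_le_of_involutive {e : ι → ι} (he : Function.Involutive e) (X : ι → ℝ) :
    𝔼 s, (X s - X (e s)) * Real.exp (X s) ≤
      (𝔼 s, (X s - X (e s)) ^ 2 * Real.exp (X s)) / 2 := by
  have expect_comp (F : ι → ℝ) : 𝔼 s, F (e s) = 𝔼 s, F s :=
    Fintype.expect_bijective e he.bijective _ _ fun _ ↦ rfl
  have hlin := expect_comp fun s ↦ (X s - X (e s)) * Real.exp (X s)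
  have hsq := expect_comp fun s ↦ (X s - X (e s)) ^ 2 * Real.exp (X s)
  simp only [he _] at hlin hsq
  have hpair : 𝔼 s, (X s - X (e s)) * (Real.exp (X s) - Real.exp (X (e s))) ≤
      𝔼 s, (X s - X (e s)) ^ 2 * (Real.exp (X s) + Real.exp (X (e s))) / 2 :=
    Finset.expect_le_expect fun s _ ↦ sub_mul_exp_sub_exp_le (X s) (X (e s))
  have hleft : 𝔼 s, (X s - X (e s)) * (Real.exp (X s) - Real.exp (X (e s))) =
      2 * 𝔼 s, (X s - X (e s)) * Real.exp (X s) := by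
    rw [two_mul]
    nth_rw 2 [← hlin]
    rw [← Finset.expect_add_distrib]
    exact Finset.expect_congr rfl fun s _ ↦ by ring
  have hright : 𝔼 s, (X s - X (e s)) ^ 2 * (Real.exp (X s) + Real.exp (X (e s))) / 2 =
      𝔼 s, (X s - X (e s)) ^ 2 * Real.exp (X s) := by
    rw [← Finset.expect_div, div_eq_iff two_ne_zero, mul_two]
    nth_rw 2 [← hsq]
    rw [← Finset.expect_add_distrib]
    exact Finset.expect_congr rfl fun s _ ↦ by ring
  linarith

end FiniteExpectation

/-- Hoeffding's permutation statistic `∑ i, d i (σ i)` of a square array `d`. -/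
def permSum {α R : Type*} [Fintype α] [AddCommMonoid R] (d : α → α → R) (σ : Equiv.Perm α) : R :=
  ∑ i, d i (σ i)

section PermSum

variable {α : Type*} [Fintype α]

lemma permSum_smul {R S : Type*} [AddCommMonoid R] [DistribSMul S R] (c : S) (d : α → α → R)
    (σ : Equiv.Perm α) : permSum (c • d) σ = c • permSum d σ :=
  (Finset.smul_sum).symm

lemma sum_sum_apply_perm {R : Type*} [AddCommMonoid R] (d : α → α → R) (σ : Equiv.Perm α) :
    ∑ a, ∑ b, d a (σ b) = ∑ i, ∑ k, d i k :=
  Finset.sum_congr rfl fun a _ ↦ Equiv.sum_comp σ (d a)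

variable [DecidableEq α] (d : α → α → ℝ) (σ : Equiv.Perm α)

lemma expect_perm_apply_s4 (f : α → ℝ) (i : α) : 𝔼 σ : Equiv.Perm α, f (σ i) = 𝔼 k, f k := by
  have : Nonempty α := ⟨i⟩
  have expect_apply_eq (k : α) :
      𝔼 σ : Equiv.Perm α, f (σ k) = 𝔼 σ : Equiv.Perm α, f (σ i) :=
    Fintype.expect_equiv (Equiv.mulRight (Equiv.swap i k)) _ _ fun σ ↦ by simp
  calc 𝔼 σ : Equiv.Perm α, f (σ i)
      = 𝔼 k, 𝔼 σ : Equiv.Perm α, f (σ k) := by simp only [expect_apply_eq, Fintype.expect_const]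
    _ = 𝔼 σ : Equiv.Perm α, 𝔼 k, f (σ k) := Finset.expect_comm _ _ _
    _ = 𝔼 _σ : Equiv.Perm α, 𝔼 k, f k :=
        Finset.expect_congr rfl fun σ _ ↦ Fintype.expect_equiv σ _ _ fun _ ↦ rfl
    _ = 𝔼 k, f k := Fintype.expect_const _

lemma card_mul_expect_permSum :
    Fintype.card α * 𝔼 σ, permSum d σ = ∑ i, ∑ k, d i k := by
  simp only [permSum, Finset.expect_sum_comm, expect_perm_apply_s4, Finset.mul_sum,
    Fintype.card_mul_expect]

lemma permSum_sub_permSum_mul_swap (a b : α) :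
    permSum d σ - permSum d (σ * Equiv.swap a b) =
      d a (σ a) + d b (σ b) - d a (σ b) - d b (σ a) := by
  rcases eq_or_ne a b with rfl | hab
  · rw [Equiv.swap_self, ← Equiv.Perm.one_def, mul_one]
    ring
  simp only [permSum]
  rw [← Finset.sum_sub_distrib, ← Finset.sum_subset (Finset.subset_univ {a, b})]
  · rw [Finset.sum_pair hab]
    simp only [Equiv.Perm.mul_apply, Equiv.swap_apply_left, Equiv.swap_apply_right]
    ring
  · intro i _ hi
    simp only [Finset.mem_insert, Finset.mem_singleton, not_or] at hi
    simp [Equiv.swap_apply_of_ne_of_ne hi.1 hi.2]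

lemma sum_sum_permSum_sub_mul_swap :
    ∑ a, ∑ b, (permSum d σ - permSum d (σ * Equiv.swap a b)) =
      2 * Fintype.card α * Fintype.balance (permSum d) σ := by
  have hcross : ∑ a, ∑ b, d b (σ a) = ∑ i, ∑ k, d i k := by
    rw [Finset.sum_comm, sum_sum_apply_perm]
  simp only [permSum_sub_permSum_mul_swap, Finset.sum_sub_distrib, Finset.sum_add_distrib,
    Finset.sum_const, Finset.card_univ, nsmul_eq_mul, ← Finset.mul_sum, sum_sum_apply_perm, hcross,
    ← card_mul_expect_permSum]
  simp only [Fintype.balance_apply, permSum]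
  ring

lemma sum_sum_permSum_sub_mul_swap_sq_le :
    ∑ a, ∑ b, (permSum d σ - permSum d (σ * Equiv.swap a b)) ^ 2 ≤
      8 * Fintype.card α * (permSum (d ^ 2) σ + 𝔼 ρ, permSum (d ^ 2) ρ) := by
  have sq_four_le (x y z w : ℝ) :
      (x + y - z - w) ^ 2 ≤ 4 * (x ^ 2 + y ^ 2 + z ^ 2 + w ^ 2) := by
    nlinarith [sq_nonneg (x - y), sq_nonneg (z - w), sq_nonneg (x + z), sq_nonneg (x + w),
      sq_nonneg (y + z), sq_nonneg (y + w)]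
  have hcross : ∑ a, ∑ b, (d ^ 2) a (σ b) = Fintype.card α * 𝔼 ρ, permSum (d ^ 2) ρ := by
    rw [sum_sum_apply_perm, card_mul_expect_permSum]
  have hcross' : ∑ a, ∑ b, (d ^ 2) b (σ a) = Fintype.card α * 𝔼 ρ, permSum (d ^ 2) ρ := by
    rw [Finset.sum_comm, hcross]
  calc ∑ a, ∑ b, (permSum d σ - permSum d (σ * Equiv.swap a b)) ^ 2
      ≤ ∑ a, ∑ b, 4 * ((d ^ 2) a (σ a) + (d ^ 2) b (σ b) + (d ^ 2) a (σ b) + (d ^ 2) b (σ a)) := by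
        simp only [permSum_sub_permSum_mul_swap]
        exact Finset.sum_le_sum fun a _ ↦ Finset.sum_le_sum fun b _ ↦ sq_four_le _ _ _ _
    _ = 8 * Fintype.card α * (permSum (d ^ 2) σ + 𝔼 ρ, permSum (d ^ 2) ρ) := by
        simp only [← Finset.mul_sum, Finset.sum_add_distrib, hcross, hcross', Finset.sum_const,
          Finset.card_univ, nsmul_eq_mul]
        simp only [permSum]
        ring

-- Averaging the exchangeable pairs `(σ, σ * swap a b)` over `a` and `b` is Stein's method.
lemma expect_balance_permSum_mul_exp_le :
    𝔼 σ, Fintype.balance (permSum d) σ * Real.exp (Fintype.balance (permSum d) σ) ≤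
      2 * 𝔼 σ, (permSum (d ^ 2) σ + 𝔼 ρ, permSum (d ^ 2) ρ) *
        Real.exp (Fintype.balance (permSum d) σ) := by
  rcases isEmpty_or_nonempty α with _ | _
  · simp [permSum, Fintype.balance_apply]
  set Y := Fintype.balance (permSum d) with hY
  have hcard : (0 : ℝ) < 2 * Fintype.card α := by
    exact_mod_cast Nat.mul_pos two_pos Fintype.card_pos
  have swap_involutive (a b : α) :
      Function.Involutive fun σ : Equiv.Perm α ↦ σ * Equiv.swap a b := fun σ ↦ by simp [mul_assoc]
  have hdiff (σ ρ : Equiv.Perm α) : Y σ - Y ρ = permSum d σ - permSum d ρ := by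
    simp only [hY, Fintype.balance_apply, sub_sub_sub_cancel_right]
  have sum_expect_comm (F : α → α → Equiv.Perm α → ℝ) :
      ∑ a, ∑ b, 𝔼 σ, F a b σ * Real.exp (Y σ) =
        𝔼 σ, (∑ a, ∑ b, F a b σ) * Real.exp (Y σ) := by
    simp only [Finset.sum_mul, Finset.expect_sum_comm]
  refine le_of_mul_le_mul_left ?_ hcard
  calc 2 * Fintype.card α * 𝔼 σ, Y σ * Real.exp (Y σ)
      = ∑ a, ∑ b, 𝔼 σ, (Y σ - Y (σ * Equiv.swap a b)) * Real.exp (Y σ) := by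
        rw [sum_expect_comm, Finset.mul_expect]
        simp only [hdiff, sum_sum_permSum_sub_mul_swap, ← hY, mul_assoc]
    _ ≤ ∑ a, ∑ b, (𝔼 σ, (Y σ - Y (σ * Equiv.swap a b)) ^ 2 * Real.exp (Y σ)) / 2 := by
        gcongr with a _ b
        exact expect_sub_mul_exp_le_of_involutive (swap_involutive a b) Y
    _ = (𝔼 σ, (∑ a, ∑ b, (Y σ - Y (σ * Equiv.swap a b)) ^ 2) * Real.exp (Y σ)) / 2 := by
        rw [← sum_expect_comm]
        simp only [Finset.sum_div]
    _ ≤ (𝔼 σ, 8 * Fintype.card α * (permSum (d ^ 2) σ + 𝔼 ρ, permSum (d ^ 2) ρ) *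
          Real.exp (Y σ)) / 2 := by
        simp only [hdiff]
        gcongr with σ
        exact sum_sum_permSum_sub_mul_swap_sq_le d σ
    _ = 2 * Fintype.card α * (2 * 𝔼 σ, (permSum (d ^ 2) σ + 𝔼 ρ, permSum (d ^ 2) ρ) *
          Real.exp (Y σ)) := by
        simp only [mul_assoc, ← Finset.mul_expect]
        ring

lemma expect_balance_permSum_mul_exp_mul_le {θ : ℝ} (hθ : 0 < θ) :
    𝔼 σ, Fintype.balance (permSum d) σ * Real.exp (θ * Fintype.balance (permSum d) σ) ≤
      2 * θ * 𝔼 σ, (permSum (d ^ 2) σ + 𝔼 ρ, permSum (d ^ 2) ρ) *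
        Real.exp (θ * Fintype.balance (permSum d) σ) := by
  have hbalance (σ : Equiv.Perm α) :
      Fintype.balance (permSum (θ • d)) σ = θ * Fintype.balance (permSum d) σ := by
    simp only [Fintype.balance_apply, permSum_smul, smul_eq_mul, ← Finset.mul_expect, mul_sub]
  have hstein := expect_balance_permSum_mul_exp_le (θ • d)
  simp only [hbalance, smul_pow, permSum_smul, smul_eq_mul, ← Finset.mul_expect, ← mul_add,
    mul_assoc] at hstein
  refine le_of_mul_le_mul_left (hstein.trans_eq ?_) hθ
  ring

lemma expect_balance_permSum_mul_exp_mul_le_log {θ : ℝ} (hθ : θ ∈ Set.Ioo 0 1) :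
    𝔼 σ, Fintype.balance (permSum d) σ * Real.exp (θ * Fintype.balance (permSum d) σ) ≤
      2 * θ * Real.log (𝔼 σ, Real.exp (3 * (permSum (d ^ 2) σ + 𝔼 ρ, permSum (d ^ 2) ρ))) *
        𝔼 σ, Real.exp (θ * Fintype.balance (permSum d) σ) := by
  set Y := Fintype.balance (permSum d) with hY
  set C := fun σ ↦ permSum (d ^ 2) σ + 𝔼 ρ, permSum (d ^ 2) ρ with hC
  set Z := 𝔼 σ, Real.exp (θ * Y σ)
  set W := 𝔼 σ, Real.exp (3 * C σ)
  obtain ⟨hθ₀, hθ₁⟩ := hθ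
  have permSum_sq_nonneg (σ : Equiv.Perm α) : 0 ≤ permSum (d ^ 2) σ :=
    Finset.sum_nonneg fun i _ ↦ sq_nonneg (d i (σ i))
  have hC₀ (σ : Equiv.Perm α) : 0 ≤ C σ :=
    add_nonneg (permSum_sq_nonneg σ) (Finset.expect_nonneg fun ρ _ ↦ permSum_sq_nonneg ρ)
  have hW : 1 ≤ W := Finset.le_expect Finset.univ_nonempty fun σ _ ↦
    Real.one_le_exp (mul_nonneg zero_le_three (hC₀ σ))
  have hZ : 1 ≤ Z := by
    simpa [← Finset.mul_expect, hY] using exp_expect_le_expect_exp fun σ ↦ θ * Y σ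
  have hlog : 0 ≤ Z * Real.log W := mul_nonneg (zero_le_one.trans hZ) (Real.log_nonneg hW)
  have hstein : 𝔼 σ, Y σ * Real.exp (θ * Y σ) ≤ 2 * θ * 𝔼 σ, C σ * Real.exp (θ * Y σ) :=
    expect_balance_permSum_mul_exp_mul_le d hθ₀
  have hgibbs : 3 * 𝔼 σ, C σ * Real.exp (θ * Y σ) - θ * 𝔼 σ, Y σ * Real.exp (θ * Y σ) ≤
      Z * Real.log W := by
    have hle := expect_sub_mul_exp_le_mul_log_div (fun σ ↦ 3 * C σ) fun σ ↦ θ * Y σ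
    simp only [sub_mul, Finset.expect_sub_distrib, mul_assoc, ← Finset.mul_expect] at hle
    refine hle.trans ?_
    gcongr
    exact div_le_self (zero_le_one.trans hW) hZ
  have habsorb : (3 - 2 * θ ^ 2) * 𝔼 σ, Y σ * Real.exp (θ * Y σ) ≤ 2 * θ * (Z * Real.log W) := by
    nlinarith
  have hcoeff : 1 ≤ 3 - 2 * θ ^ 2 := by nlinarith
  refine le_of_mul_le_mul_left (habsorb.trans ?_) (zero_lt_one.trans_le hcoeff)
  rw [show 2 * θ * Real.log W * Z = 2 * θ * (Z * Real.log W) by ring]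
  exact le_mul_of_one_le_left (by positivity) hcoeff

lemma expect_exp_balance_permSum_le :
    𝔼 σ, Real.exp (Fintype.balance (permSum d) σ) ≤
      𝔼 σ, Real.exp (6 * permSum (d ^ 2) σ) := by
  have hpos : 0 < 𝔼 σ, Real.exp (3 * (permSum (d ^ 2) σ + 𝔼 ρ, permSum (d ^ 2) ρ)) :=
    Finset.expect_pos (fun _ _ ↦ Real.exp_pos _) Finset.univ_nonempty
  calc 𝔼 σ, Real.exp (Fintype.balance (permSum d) σ)
      ≤ 𝔼 σ, Real.exp (3 * (permSum (d ^ 2) σ + 𝔼 ρ, permSum (d ^ 2) ρ)) := by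
        simpa [Real.exp_log hpos] using expect_exp_mul_le_of_expect_mul_exp_le _ zero_le_one
          fun θ hθ ↦ expect_balance_permSum_mul_exp_mul_le_log d hθ
    _ ≤ 𝔼 σ, Real.exp (6 * permSum (d ^ 2) σ) := by
        have hle := expect_exp_add_expect_le fun σ ↦ 3 * permSum (d ^ 2) σ
        simp only [← Finset.mul_expect, ← mul_add, ← mul_assoc] at hle
        norm_num at hle
        exact hle

variable {d} in
lemma sum_exp_permSum_le (hd : ∑ i, ∑ k, d i k = 0) :
    ∑ σ, Real.exp (permSum d σ) ≤ ∑ σ, Real.exp (6 * permSum (d ^ 2) σ) := by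
  have hmean : 𝔼 σ, permSum d σ = 0 := by
    rcases isEmpty_or_nonempty α with _ | _
    · simp [permSum]
    · simpa [hd] using card_mul_expect_permSum d
  have hle := expect_exp_balance_permSum_le d
  simp only [Fintype.balance_apply, hmean, sub_zero, Fintype.expect_eq_sum_div_card] at hle
  exact (div_le_div_iff_of_pos_right (by exact_mod_cast Fintype.card_pos)).mp hle

end PermSum

section GaussianRandomization

/-- The joint law of a family of i.i.d. standard Gaussian random variables indexed by a finite
type; `gaussPi n` is the case of `Fin n`. -/
noncomputable def iidGaussian (ι : Type*) [Fintype ι] : Measure (ι → ℝ) :=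
  Measure.pi fun _ ↦ gaussianReal 0 1

instance {ι : Type*} [Fintype ι] : IsProbabilityMeasure (iidGaussian ι) :=
  inferInstanceAs (IsProbabilityMeasure (Measure.pi fun _ ↦ gaussianReal 0 1))

lemma lintegral_exp_sum_mul_iidGaussian {ι : Type*} [Fintype ι] (c : ι → ℝ) :
    ∫⁻ g, ENNReal.ofReal (Real.exp (∑ i, c i * g i)) ∂(iidGaussian ι) =
      ENNReal.ofReal (Real.exp ((∑ i, c i ^ 2) / 2)) := by
  have hint : Integrable (fun g : ι → ℝ ↦ ∏ i, Real.exp (c i * g i)) (iidGaussian ι) :=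
    Integrable.fintype_prod (f := fun i x ↦ Real.exp (c i * x))
      fun i ↦ integrable_exp_mul_gaussianReal (c i)
  have gaussian_mgf (t : ℝ) : ∫ x, Real.exp (t * x) ∂(gaussianReal 0 1) = Real.exp (t ^ 2 / 2) := by
    simpa [mgf] using congrFun (mgf_id_gaussianReal (μ := 0) (v := 1)) t
  simp only [Real.exp_sum]
  rw [← ofReal_integral_eq_lintegral_ofReal hint (ae_of_all _ fun g ↦ by positivity), iidGaussian,
    integral_fintype_prod_eq_prod fun i x ↦ Real.exp (c i * x)]
  simp only [gaussian_mgf, ← Real.exp_sum, Finset.sum_div]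

variable {ι κ : Type*} [Fintype ι] [Fintype κ]

lemma measurable_lintegral_exp_mul_sum_sum (c : ℝ) (a : ι → κ → ℝ) :
    Measurable fun g : ι → ℝ ↦ ∫⁻ g', ENNReal.ofReal
      (Real.exp (c * ∑ i, ∑ j, a i j * g i * g' j)) ∂(iidGaussian κ) :=
  Measurable.lintegral_prod_right' (f := fun p : (ι → ℝ) × (κ → ℝ) ↦ ENNReal.ofReal
    (Real.exp (c * ∑ i, ∑ j, a i j * p.1 i * p.2 j))) (by fun_prop)

variable [DecidableEq κ]

lemma sum_exp_permSum_le_lintegral {d : κ → κ → ℝ} (hd : ∑ j, ∑ l, d j l = 0) :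
    ∑ τ : Equiv.Perm κ, ENNReal.ofReal (Real.exp (∑ j, d j (τ j))) ≤
      ∑ τ : Equiv.Perm κ,
        ∫⁻ g, ENNReal.ofReal (Real.exp (∑ j, √12 * d j (τ j) * g j)) ∂(iidGaussian κ) := by
  have hvariance (τ : Equiv.Perm κ) :
      (∑ j, (√12 * d j (τ j)) ^ 2) / 2 = 6 * permSum (d ^ 2) τ := by
    simp only [mul_pow, Real.sq_sqrt (by norm_num : (0 : ℝ) ≤ 12), ← Finset.mul_sum, permSum,
      Pi.pow_apply]
    ring
  simp only [lintegral_exp_sum_mul_iidGaussian, hvariance]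
  rw [← ENNReal.ofReal_sum_of_nonneg fun _ _ ↦ (Real.exp_pos _).le,
    ← ENNReal.ofReal_sum_of_nonneg fun _ _ ↦ (Real.exp_pos _).le]
  exact ENNReal.ofReal_le_ofReal (sum_exp_permSum_le hd)

lemma sum_exp_sum_mul_le_sum_lintegral {d : ι → κ → κ → ℝ} (hd : ∀ i, ∑ j, ∑ l, d i j l = 0)
    (g : ι → ℝ) :
    ∑ τ : Equiv.Perm κ, ENNReal.ofReal (Real.exp (∑ i, √12 * (∑ j, d i j (τ j)) * g i)) ≤
      ∑ τ : Equiv.Perm κ, ∫⁻ g', ENNReal.ofReal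
        (Real.exp (12 * ∑ i, ∑ j, d i j (τ j) * g i * g' j)) ∂(iidGaussian κ) := by
  have hcentered : ∑ j, ∑ l, ∑ i, √12 * d i j l * g i = 0 := by
    calc ∑ j, ∑ l, ∑ i, √12 * d i j l * g i
        = ∑ i, √12 * (∑ j, ∑ l, d i j l) * g i := by
          simp only [Finset.sum_comm (s := Finset.univ (α := κ)) (t := Finset.univ (α := ι)),
            Finset.mul_sum, Finset.sum_mul]
      _ = 0 := by simp only [hd, mul_zero, zero_mul, Finset.sum_const_zero]
  have hfactor (τ : Equiv.Perm κ) :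
      ∑ i, √12 * (∑ j, d i j (τ j)) * g i = ∑ j, ∑ i, √12 * d i j (τ j) * g i := by
    simp only [Finset.mul_sum, Finset.sum_mul]
    exact Finset.sum_comm
  have hsqrt : √12 * √12 = (12 : ℝ) := Real.mul_self_sqrt (by norm_num)
  have hproduct (τ : Equiv.Perm κ) (g' : κ → ℝ) :
      ∑ j, √12 * (∑ i, √12 * d i j (τ j) * g i) * g' j =
        12 * ∑ i, ∑ j, d i j (τ j) * g i * g' j := by
    simp only [Finset.mul_sum, Finset.sum_mul, ← mul_assoc, hsqrt]
    exact Finset.sum_comm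
  simpa only [hfactor, hproduct] using sum_exp_permSum_le_lintegral hcentered

variable [DecidableEq ι]

lemma sum_sum_exp_le_sum_sum_lintegral {d : ι → κ → ι → κ → ℝ}
    (hκ : ∀ i k, ∑ j, ∑ l, d i j k l = 0) (hι : ∀ j l, ∑ i, ∑ k, d i j k l = 0) :
    ∑ σ : Equiv.Perm ι, ∑ τ : Equiv.Perm κ,
        ENNReal.ofReal (Real.exp (∑ i, ∑ j, d i j (σ i) (τ j))) ≤
      ∑ σ : Equiv.Perm ι, ∑ τ : Equiv.Perm κ, ∫⁻ g, ∫⁻ g',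
        ENNReal.ofReal (Real.exp (12 * ∑ i, ∑ j, d i j (σ i) (τ j) * g i * g' j))
          ∂(iidGaussian κ) ∂(iidGaussian ι) := by
  have hrow (τ : Equiv.Perm κ) : ∑ i, ∑ k, ∑ j, d i j k (τ j) = 0 := by
    simp only [Finset.sum_comm (s := Finset.univ (α := ι)) (t := Finset.univ (α := κ)), hι,
      Finset.sum_const_zero]
  have hmeas (a : ι → ℝ) :
      Measurable fun g : ι → ℝ ↦ ENNReal.ofReal (Real.exp (∑ i, a i * g i)) := by fun_prop
  calc ∑ σ : Equiv.Perm ι, ∑ τ : Equiv.Perm κ,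
        ENNReal.ofReal (Real.exp (∑ i, ∑ j, d i j (σ i) (τ j)))
      ≤ ∑ σ : Equiv.Perm ι, ∑ τ : Equiv.Perm κ, ∫⁻ g, ENNReal.ofReal (Real.exp
          (∑ i, √12 * (∑ j, d i j (σ i) (τ j)) * g i)) ∂(iidGaussian ι) := by
        rw [Finset.sum_comm]
        conv_rhs => rw [Finset.sum_comm]
        exact Finset.sum_le_sum fun τ _ ↦
          sum_exp_permSum_le_lintegral (d := fun i k ↦ ∑ j, d i j k (τ j)) (hrow τ)
    _ = ∑ σ : Equiv.Perm ι, ∫⁻ g, ∑ τ : Equiv.Perm κ, ENNReal.ofReal (Real.exp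
          (∑ i, √12 * (∑ j, d i j (σ i) (τ j)) * g i)) ∂(iidGaussian ι) :=
        Finset.sum_congr rfl fun σ _ ↦ by rw [lintegral_finsetSum _ fun τ _ ↦ hmeas _]
    _ ≤ ∑ σ : Equiv.Perm ι, ∫⁻ g, ∑ τ : Equiv.Perm κ, ∫⁻ g',
          ENNReal.ofReal (Real.exp (12 * ∑ i, ∑ j, d i j (σ i) (τ j) * g i * g' j))
            ∂(iidGaussian κ) ∂(iidGaussian ι) :=
        Finset.sum_le_sum fun σ _ ↦
          lintegral_mono fun g ↦ sum_exp_sum_mul_le_sum_lintegral (fun i ↦ hκ i (σ i)) g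
    _ = ∑ σ : Equiv.Perm ι, ∑ τ : Equiv.Perm κ, ∫⁻ g, ∫⁻ g',
          ENNReal.ofReal (Real.exp (12 * ∑ i, ∑ j, d i j (σ i) (τ j) * g i * g' j))
            ∂(iidGaussian κ) ∂(iidGaussian ι) :=
        Finset.sum_congr rfl fun σ _ ↦ lintegral_finsetSum _ fun τ _ ↦
          measurable_lintegral_exp_mul_sum_sum 12 fun i j ↦ d i j (σ i) (τ j)

theorem combinatorial_randomization_general {Ω : Type*} [MeasurableSpace Ω] (μ : Measure Ω)
    {D : Ω → ι → κ → ι → κ → ℝ}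
    (hκ : ∀ᵐ ω ∂μ, ∀ i k, ∑ j, ∑ l, D ω i j k l = 0)
    (hι : ∀ᵐ ω ∂μ, ∀ j l, ∑ i, ∑ k, D ω i j k l = 0) (c : ℝ) :
    ∫⁻ ω, (∑ σ : Equiv.Perm ι, ∑ τ : Equiv.Perm κ,
        ENNReal.ofReal (Real.exp (c * ∑ i, ∑ j, D ω i j (σ i) (τ j)))) /
          ((Fintype.card ι).factorial * (Fintype.card κ).factorial) ∂μ ≤
      ∫⁻ ω, (∑ σ : Equiv.Perm ι, ∑ τ : Equiv.Perm κ, ∫⁻ g, ∫⁻ g',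
        ENNReal.ofReal (Real.exp (12 * c * ∑ i, ∑ j, D ω i j (σ i) (τ j) * g i * g' j))
          ∂(iidGaussian κ) ∂(iidGaussian ι)) /
          ((Fintype.card ι).factorial * (Fintype.card κ).factorial) ∂μ := by
  refine lintegral_mono_ae ?_
  filter_upwards [hκ, hι] with ω hκω hιω
  have hle := sum_sum_exp_le_sum_sum_lintegral (d := fun i j k l ↦ c * D ω i j k l)
    (fun i k ↦ by simp only [← Finset.mul_sum, hκω, mul_zero])
    fun j l ↦ by simp only [← Finset.mul_sum, hιω, mul_zero]
  simp only [mul_assoc, ← Finset.mul_sum] at hle ⊢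
  exact ENNReal.div_le_div_right hle _

end GaussianRandomization

/-- Combinatorial randomization.  The random tensor `D` lives on a probability
space `(Ω, μ)` and is independent of the uniform permutations `π, τ` and of the
i.i.d. standard Gaussians `G, G'`; this independence is encoded by writing the
expectation as the outer integral over `Ω` of the average over permutations and
the Gaussian product measures.  Expectations of the (nonnegative) exponentials
are taken as lower Lebesgue integrals. -/
theorem combinatorial_randomization
    {Ω : Type*} [MeasurableSpace Ω] (μ : Measure Ω) [IsProbabilityMeasure μ]
    (N M : ℕ) (hN : 0 < N) (hM : 0 < M)
    (D : Ω → Fin N → Fin M → Fin N → Fin M → ℝ) (hD : Measurable D)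
    (hcent1 : ∀ᵐ ω ∂μ, ∀ (i k : Fin N), ∑ j' : Fin M, ∑ l' : Fin M, D ω i j' k l' = 0)
    (hcent2 : ∀ᵐ ω ∂μ, ∀ (j l : Fin M), ∑ i' : Fin N, ∑ k' : Fin N, D ω i' j k' l = 0)
    (lam : ℝ) (hlam : 0 ≤ lam) :
    (∫⁻ ω, (∑ σ : Equiv.Perm (Fin N), ∑ τ : Equiv.Perm (Fin M),
        ENNReal.ofReal (Real.exp (lam * ∑ i : Fin N, ∑ j : Fin M, D ω i j (σ i) (τ j))))
        / ((Nat.factorial N : ℝ≥0∞) * (Nat.factorial M : ℝ≥0∞)) ∂μ)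
      ≤
    (∫⁻ ω, (∑ σ : Equiv.Perm (Fin N), ∑ τ : Equiv.Perm (Fin M),
        ∫⁻ g, ∫⁻ g',
          ENNReal.ofReal (Real.exp (12 * lam *
            ∑ i : Fin N, ∑ j : Fin M, D ω i j (σ i) (τ j) * g i * g' j))
          ∂(gaussPi M) ∂(gaussPi N))
        / ((Nat.factorial N : ℝ≥0∞) * (Nat.factorial M : ℝ≥0∞)) ∂μ) := by
  simpa only [Fintype.card_fin, gaussPi, iidGaussian] using
    combinatorial_randomization_general μ hcent1 hcent2 lam
end
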